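/- arXiv:1310.7260 — 2 statements merged into one kernel-verified Lean document; each statement's English description precedes it below -/
import Mathlib

section
/- For every integer d ≥ 2, the laws of W_n := n^{-d} ∑_{1≤i₁,…,i_d≤n} 1_{gcd(X_{i₁},…,X_{i_d})=1} satisfy a large deviation principle with speed n and rate function I(x) = inf{ ∫_{[0,1]} log(dμ/dν) dμ : μ a Borel probability measure on [0,1] with ∫⋯∫_{[0,1]^d} f(x₁,…,x_d) μ(dx₁)⋯μ(dx_d) = x }, the relative entropy being +∞ when μ is not absolutely continuous with respect to ν: for every Borel set A ⊆ [0,1], −inf_{x∈A°} I(x) ≤ liminf_{n→∞} (1/n) log P(W_n ∈ A) ≤ limsup_{n→∞} (1/n) log P(W_n ∈ A) ≤ −inf_{x∈closure(A)} I(x). -/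
open MeasureTheory ProbabilityTheory Filter Real
open scoped ENNReal

/-- The joint law of `n` i.i.d. random variables, each uniformly distributed on
`{1, 2, …, n}` (the coordinates `ω ↦ ω i` are the random variables `X_i`). -/
noncomputable def unifVec (n : ℕ) : Measure (Fin n → ℕ) :=
  Measure.pi fun _ => uniformOn (Set.Icc 1 n)

/-- `digit i a` is the `(i+1)`-st digit of the binary expansion of `a`
(the finite expansion is selected for dyadic rationals). -/
noncomputable def digit (i : ℕ) (a : ℝ) : ℕ := ⌊a * 2 ^ (i + 1)⌋.toNat % 2

/-- `f(x₁,…,x_d) = 1` if there is no position at which the binary expansions of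
`x₁,…,x_d` all have digit `1`, and `f(x₁,…,x_d) = 0` otherwise. -/
noncomputable def coprimeKernelD (d : ℕ) (x : Fin d → ℝ) : ℝ :=
  Set.indicator {y : Fin d → ℝ | ∀ i : ℕ, ¬(∀ t : Fin d, digit i (y t) = 1)}
    (fun _ => (1 : ℝ)) x

open Classical in
/-- Relative entropy `∫ log(dμ/dν) dμ`, with value `+∞` when `μ` is not
absolutely continuous with respect to `ν` (or when the defining integral is
infinite); for `μ ≪ ν` it is computed as `∫ (g log g − g + 1) dν` with
`g = dμ/dν`, whose integrand is nonnegative. -/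
noncomputable def relEntropy {α : Type*} [MeasurableSpace α] (μ ν : Measure α) : EReal :=
  if μ ≪ ν then
    ((∫⁻ a, ENNReal.ofReal ((μ.rnDeriv ν a).toReal * Real.log (μ.rnDeriv ν a).toReal
        - (μ.rnDeriv ν a).toReal + 1) ∂ν : ℝ≥0∞) : EReal)
  else ⊤

/-- The rate function
`I(x) = inf { ∫ log(dμ/dν) dμ : μ prob. measure on [0,1], ∫⋯∫ f dμ⋯dμ = x }`
(the infimum of the empty set being `+∞`); the `d`-fold integral is written as
an integral against the product measure `μ^{⊗d}`. -/
noncomputable def coprimeRateD (d : ℕ) (ν : Measure ℝ) (x : ℝ) : EReal :=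
  ⨅ (μ : Measure ℝ) (_ : IsProbabilityMeasure μ ∧ μ (Set.Icc 0 1) = 1 ∧
      (∫ y, coprimeKernelD d y ∂(Measure.pi fun _ : Fin d => μ)) = x), relEntropy μ ν

/-! Whether `gcd (x₁, …, x_d) = 1` depends only on the sets of primes dividing the `xₜ`. Recording
divisibility by the first `k` primes sorts a uniform integer of `{1, …, n}` into finitely many
types, whose probabilities converge to those of the first `k` digits under `ν`. Sanov's theorem on a
finite alphabet governs the type frequencies of the sample, and `W_n` differs from a continuous
function of them by at most the proportion of pairs sharing a prime beyond the `k`-th. This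
proportion is small up to super-exponentially small probability as `k → ∞`: if there are many such
pairs, then many of them lie on one antidiagonal `i + j = s`, where they are disjoint, hence
independent. On the side of the rate function, the measures of relative entropy at most `c` are
uniformly absolutely continuous, so truncating `f` at `k` digits changes `∫ f dμ^{⊗d}` uniformly
little; they are also compact for setwise convergence, so the infima converge as `k → ∞`. -/

open InformationTheory
open scoped Topology

section RelativeEntropy

variable {α : Type*} [MeasurableSpace α] {μ ν : Measure α}

lemma relEntropy_eq_klDiv [IsFiniteMeasure μ] [IsFiniteMeasure ν] :
    relEntropy μ ν = (klDiv μ ν : EReal) := by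
  rw [relEntropy, klDiv_eq_lintegral_klFun]
  split_ifs
  · simp only [klFun_apply, add_sub_right_comm]
  · rfl

lemma mul_sub_exp_sub_one_le_klFun {g : ℝ} (hg : 0 ≤ g) (s : ℝ) :
    g * s - (exp s - 1) ≤ klFun g := by
  rw [klFun_apply]
  rcases hg.eq_or_lt with rfl | hpos
  · simpa using (exp_pos s).le
  · have hexp : exp s = g * exp (s - log g) := by
      rw [exp_sub, exp_log hpos]; field_simp
    nlinarith [add_one_le_exp (s - log g)]

lemma klFun_le_mul_log_sub {g x : ℝ} (h : 0 ≤ (g - x) * log x) :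
    klFun x ≤ g * log x - (x - 1) := by
  rw [klFun_apply]; linarith

lemma absolutelyContinuous_of_forall_integral_sub_le [IsFiniteMeasure μ] {c : ℝ}
    (H : ∀ s : α → ℝ, Measurable s → (∃ C, ∀ a, |s a| ≤ C) →
      ∫ a, s a ∂μ - ∫ a, (exp (s a) - 1) ∂ν ≤ c) : μ ≪ ν := by
  refine .mk fun E hE hνE ↦ ?_
  have hbound (l : ℝ) : l * μ.real E ≤ c := by
    have hν : ∫ a, (exp (E.indicator (fun _ ↦ l) a) - 1) ∂ν = 0 := by
      refine integral_eq_zero_of_ae ?_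
      filter_upwards [compl_mem_ae_iff.2 hνE] with a ha
      simp [Set.indicator_of_notMem ha]
    have htest := H (E.indicator fun _ ↦ l) (measurable_const.indicator hE)
      ⟨|l|, fun a ↦ by by_cases ha : a ∈ E <;> simp [ha]⟩
    rw [hν, integral_indicator_const _ hE] at htest
    simpa [mul_comm] using htest
  by_contra hμE
  have hpos : 0 < μ.real E := ENNReal.toReal_pos hμE (measure_ne_top μ E)
  have := hbound ((c + 1) / μ.real E)
  rw [div_mul_cancel₀ _ hpos.ne'] at this
  linarith

section DonskerVaradhan

variable [IsFiniteMeasure μ] [IsFiniteMeasure ν]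

lemma integrable_exp_sub_one {s : α → ℝ} (hs : Measurable s) {C : ℝ} (hC : ∀ a, |s a| ≤ C) :
    Integrable (fun a ↦ exp (s a) - 1) ν := by
  refine .of_bound (by fun_prop) (exp C + 1) (ae_of_all _ fun a ↦ ?_)
  rw [norm_eq_abs, abs_le]
  constructor <;> linarith [exp_le_exp.2 ((le_abs_self _).trans (hC a)), exp_pos (s a), exp_pos C]

lemma integral_sub_integral_exp_le_toReal_klDiv (h : klDiv μ ν ≠ ∞) {s : α → ℝ}
    (hs : Measurable s) {C : ℝ} (hC : ∀ a, |s a| ≤ C) :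
    ∫ a, s a ∂μ - ∫ a, (exp (s a) - 1) ∂ν ≤ (klDiv μ ν).toReal := by
  obtain ⟨hac, hllr⟩ := klDiv_ne_top_iff.1 h
  have hint : Integrable (fun a ↦ (μ.rnDeriv ν a).toReal * s a) ν :=
    (integrable_rnDeriv_smul_iff hac).2 (.of_bound hs.aestronglyMeasurable C (ae_of_all _ hC))
  have hint' : Integrable (fun a ↦ exp (s a) - 1) ν := integrable_exp_sub_one hs hC
  calc ∫ a, s a ∂μ - ∫ a, (exp (s a) - 1) ∂ν
      = ∫ a, ((μ.rnDeriv ν a).toReal * s a - (exp (s a) - 1)) ∂ν := by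
        rw [integral_sub hint hint', ← integral_rnDeriv_smul hac]; rfl
    _ ≤ ∫ a, klFun (μ.rnDeriv ν a).toReal ∂ν :=
        integral_mono (hint.sub hint') ((integrable_klFun_rnDeriv_iff hac).2 hllr)
          fun a ↦ mul_sub_exp_sub_one_le_klFun ENNReal.toReal_nonneg (s a)
    _ = (klDiv μ ν).toReal := (toReal_klDiv_eq_integral_klFun hac).symm

lemma measureReal_le_of_klDiv_ne_top (h : klDiv μ ν ≠ ∞) {E : Set α} (hE : MeasurableSet E)
    {l : ℝ} (hl : 0 < l) :
    μ.real E ≤ ((klDiv μ ν).toReal + (exp l - 1) * ν.real E) / l := by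
  have htest := integral_sub_integral_exp_le_toReal_klDiv h (s := E.indicator fun _ ↦ l)
    (measurable_const.indicator hE) (C := l) fun a ↦ by
      by_cases ha : a ∈ E <;> simp [ha, abs_of_pos hl, hl.le]
  have hexp : (fun a ↦ exp (E.indicator (fun _ ↦ l) a) - 1) =
      E.indicator fun _ ↦ exp l - 1 := by
    ext a; by_cases ha : a ∈ E <;> simp [ha]
  rw [hexp, integral_indicator_const _ hE, integral_indicator_const _ hE] at htest
  rw [le_div_iff₀ hl]
  simp only [smul_eq_mul] at htest
  linarith

/-- The truncation of `g` to `[1 / (n + 1), n + 1]`, whose logarithm serves as a bounded test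
function in the Donsker–Varadhan formula. -/
noncomputable def clip (n : ℕ) (g : ℝ) : ℝ := max (1 / ((n : ℝ) + 1)) (min g (n + 1))

lemma one_div_le_clip (n : ℕ) (g : ℝ) : 1 / ((n : ℝ) + 1) ≤ clip n g := le_max_left _ _

lemma one_div_succ_le_succ (n : ℕ) : 1 / ((n : ℝ) + 1) ≤ n + 1 := by
  rw [div_le_iff₀ (by positivity)]; nlinarith [n.cast_nonneg (α := ℝ)]

lemma clip_pos (n : ℕ) (g : ℝ) : 0 < clip n g :=
  lt_of_lt_of_le (by positivity) (one_div_le_clip n g)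

lemma clip_le (n : ℕ) (g : ℝ) : clip n g ≤ n + 1 :=
  max_le (one_div_succ_le_succ n) (min_le_right _ _)

lemma abs_log_clip_le (n : ℕ) (g : ℝ) : |log (clip n g)| ≤ log (n + 1) := by
  refine abs_le.2 ⟨?_, log_le_log (clip_pos n g) (clip_le n g)⟩
  have := log_le_log (by positivity) (one_div_le_clip n g)
  rwa [one_div, log_inv] at this

lemma tendsto_clip {g : ℝ} (hg : 0 ≤ g) : Tendsto (fun n ↦ clip n g) atTop (𝓝 g) := by
  have hlow := tendsto_one_div_add_atTop_nhds_zero_nat (𝕜 := ℝ)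
  have hhigh : Tendsto (fun n : ℕ ↦ min g ((n : ℝ) + 1)) atTop (𝓝 g) := by
    refine tendsto_const_nhds.congr' ?_
    filter_upwards [eventually_ge_atTop ⌈g⌉₊] with n hn
    exact (min_eq_left (by linarith [Nat.ceil_le.1 hn])).symm
  simpa only [max_eq_right hg, clip] using hlow.max hhigh

lemma klFun_clip_le (n : ℕ) (g : ℝ) :
    klFun (clip n g) ≤ g * log (clip n g) - (clip n g - 1) := by
  refine klFun_le_mul_log_sub ?_
  have hn : (1 : ℝ) ≤ n + 1 := by linarith [n.cast_nonneg (α := ℝ)]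
  rcases le_or_gt g (n + 1) with hle | hgt
  · rcases le_or_gt (1 / ((n : ℝ) + 1)) g with hge | hlt
    · rw [clip, min_eq_left hle, max_eq_right hge, sub_self, zero_mul]
    · rw [clip, min_eq_left hle, max_eq_left hlt.le]
      exact mul_nonneg_of_nonpos_of_nonpos (sub_nonpos.2 hlt.le)
        (log_nonpos (by positivity) (div_le_one_of_le₀ hn (by positivity)))
  · rw [clip, min_eq_right hgt.le, max_eq_right (one_div_succ_le_succ n)]
    exact mul_nonneg (sub_nonneg.2 hgt.le) (log_nonneg hn)

lemma measurable_clip (n : ℕ) : Measurable (clip n) := by unfold clip; fun_prop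

lemma tendsto_mul_log_clip {g : ℝ} (hg : 0 ≤ g) :
    Tendsto (fun n ↦ g * log (clip n g) - (clip n g - 1)) atTop (𝓝 (klFun g)) := by
  have hlog : Tendsto (fun n ↦ g * log (clip n g)) atTop (𝓝 (g * log g)) := by
    rcases hg.eq_or_lt with rfl | hpos
    · simp
    · exact ((tendsto_clip hg).log hpos.ne').const_mul g
  rw [klFun_apply, ← sub_sub_eq_add_sub]
  exact hlog.sub ((tendsto_clip hg).sub_const 1)

lemma klDiv_le_of_forall_integral_sub_le {c : ℝ}
    (H : ∀ s : α → ℝ, Measurable s → (∃ C, ∀ a, |s a| ≤ C) →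
      ∫ a, s a ∂μ - ∫ a, (exp (s a) - 1) ∂ν ≤ c) : klDiv μ ν ≤ ENNReal.ofReal c := by
  have hac : μ ≪ ν := absolutelyContinuous_of_forall_integral_sub_le H
  let g : α → ℝ := fun a ↦ (μ.rnDeriv ν a).toReal
  let s : ℕ → α → ℝ := fun n a ↦ log (clip n (g a))
  let u : ℕ → α → ℝ := fun n a ↦ g a * s n a - (clip n (g a) - 1)
  have hg : Measurable g := (μ.measurable_rnDeriv ν).ennreal_toReal
  have hclip (n) : Measurable fun a ↦ clip n (g a) := (measurable_clip n).comp hg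
  have hs (n) : Measurable (s n) := (hclip n).log
  have hbound (n) : ∫⁻ a, ENNReal.ofReal (u n a) ∂ν ≤ ENNReal.ofReal c := by
    have hint : Integrable (fun a ↦ g a * s n a) ν :=
      (integrable_rnDeriv_smul_iff hac).2
        (.of_bound (hs n).aestronglyMeasurable _ (ae_of_all _ fun a ↦ abs_log_clip_le n (g a)))
    have hexp : (fun a ↦ exp (s n a) - 1) = fun a ↦ clip n (g a) - 1 := by
      ext a; rw [exp_log (clip_pos n _)]
    have hint' : Integrable (fun a ↦ clip n (g a) - 1) ν :=
      hexp ▸ integrable_exp_sub_one (hs n) fun a ↦ abs_log_clip_le n (g a)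
    have hu : Integrable (u n) ν := hint.sub hint'
    rw [← ofReal_integral_eq_lintegral_ofReal hu (ae_of_all _ fun a ↦
      (klFun_nonneg (clip_pos n _).le).trans (klFun_clip_le n (g a)))]
    refine ENNReal.ofReal_le_ofReal ?_
    have htest := H (s n) (hs n) ⟨_, fun a ↦ abs_log_clip_le n (g a)⟩
    rw [hexp, ← integral_rnDeriv_smul hac] at htest
    exact (integral_sub hint hint').trans_le htest
  calc klDiv μ ν = ∫⁻ a, liminf (fun n ↦ ENNReal.ofReal (u n a)) atTop ∂ν := by
        rw [klDiv_eq_lintegral_klFun_of_ac hac]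
        refine lintegral_congr fun a ↦ (Tendsto.liminf_eq ?_).symm
        exact ENNReal.tendsto_ofReal (tendsto_mul_log_clip ENNReal.toReal_nonneg)
    _ ≤ liminf (fun n ↦ ∫⁻ a, ENNReal.ofReal (u n a) ∂ν) atTop :=
        lintegral_liminf_le fun n ↦ ((hg.mul (hs n)).sub ((hclip n).sub_const 1)).ennreal_ofReal
    _ ≤ ENNReal.ofReal c := liminf_le_of_le (by isBoundedDefault) fun b hb ↦ by
        obtain ⟨n, hn⟩ := hb.exists
        exact hn.trans (hbound n)

end DonskerVaradhan

lemma klDiv_prod_right {β : Type*} [MeasurableSpace β] (τ : Measure β) [IsProbabilityMeasure τ]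
    [IsFiniteMeasure μ] [IsFiniteMeasure ν] : klDiv (μ.prod τ) (ν.prod τ) = klDiv μ ν := by
  rw [← Measure.compProd_const, ← Measure.compProd_const, klDiv_compProd_left]

lemma klDiv_prod_le {β : Type*} [MeasurableSpace β] {μ' ν' : Measure β} [IsProbabilityMeasure μ]
    [IsProbabilityMeasure ν] [IsProbabilityMeasure μ'] [IsProbabilityMeasure ν'] :
    klDiv (μ.prod μ') (ν.prod ν') ≤ klDiv μ ν + klDiv μ' ν' := by
  calc klDiv (μ.prod μ') (ν.prod ν') = klDiv μ ν + klDiv (μ.prod μ') (μ.prod ν') := by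
        rw [← Measure.compProd_const, ← Measure.compProd_const, klDiv_compProd_eq_add,
          Measure.compProd_const, Measure.compProd_const]
    _ = klDiv μ ν + klDiv ((μ'.prod μ).map Prod.swap) ((ν'.prod μ).map Prod.swap) := by
        rw [Measure.prod_swap, Measure.prod_swap]
    _ ≤ klDiv μ ν + klDiv (μ'.prod μ) (ν'.prod μ) := by
        gcongr; exact klDiv_map_le _ _ measurable_swap
    _ = klDiv μ ν + klDiv μ' ν' := by rw [klDiv_prod_right]

end RelativeEntropy

section SetwiseConvergence

variable {α ι : Type*} [MeasurableSpace α]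

/-- Setwise convergence of measures along a filter: the topology in which entropy balls are
compact, without any topology on the space itself. -/
def TendstoSetwise (μs : ι → Measure α) (l : Filter ι) (μ : Measure α) : Prop :=
  ∀ E, MeasurableSet E → Tendsto (fun i ↦ (μs i).real E) l (𝓝 (μ.real E))

/-- Uniform absolute continuity of a family of measures with respect to `ν`, the property of
entropy balls which makes their setwise limits countably additive. -/
def UniformlyAbsolutelyContinuous (μs : ι → Measure α) (ν : Measure α) : Prop :=
  ∀ ε > 0, ∃ δ > 0, ∀ E, MeasurableSet E → ν E ≤ δ → ∀ i, μs i E ≤ ε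

lemma exists_simpleFunc_forall_abs_sub_le {s : α → ℝ} (hs : Measurable s) {C : ℝ}
    (hC : ∀ a, |s a| ≤ C) {ε : ℝ} (hε : 0 < ε) :
    ∃ φ : SimpleFunc α ℝ, ∀ a, |s a - φ a| ≤ ε := by
  have hfloor : Measurable fun a ↦ ⌊s a / ε⌋ := (hs.div_const ε).floor
  have hfin : (Set.range fun a ↦ ⌊s a / ε⌋).Finite := by
    refine (Set.finite_Icc ⌊-C / ε⌋ ⌊C / ε⌋).subset ?_
    rintro _ ⟨a, rfl⟩
    obtain ⟨h1, h2⟩ := abs_le.1 (hC a)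
    exact ⟨Int.floor_mono (by gcongr), Int.floor_mono (by gcongr)⟩
  let ψ : SimpleFunc α ℤ := ⟨_, fun z ↦ hfloor (measurableSet_singleton z), hfin⟩
  refine ⟨ψ.map fun z : ℤ ↦ ε * (z : ℝ), fun a ↦ ?_⟩
  have h1 := mul_le_mul_of_nonneg_left (Int.floor_le (s a / ε)) hε.le
  have h2 := mul_lt_mul_of_pos_left (Int.lt_floor_add_one (s a / ε)) hε
  rw [mul_div_cancel₀ _ hε.ne'] at h1 h2
  change |s a - ε * ⌊s a / ε⌋| ≤ ε
  rw [abs_le]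
  constructor <;> linarith

lemma abs_integral_sub_integral_le {μ : Measure α} [IsProbabilityMeasure μ] {s t : α → ℝ}
    (hs : Integrable s μ) (ht : Integrable t μ) {ε : ℝ} (h : ∀ a, |s a - t a| ≤ ε) :
    |∫ a, s a ∂μ - ∫ a, t a ∂μ| ≤ ε := by
  rw [← integral_sub hs ht]
  simpa using norm_integral_le_of_norm_le_const (μ := μ) (f := fun a ↦ s a - t a) (ae_of_all _ h)

lemma TendstoSetwise.tendsto_integral {μs : ι → Measure α} {l : Filter ι} {μ : Measure α}
    [∀ i, IsProbabilityMeasure (μs i)] [IsProbabilityMeasure μ] (h : TendstoSetwise μs l μ)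
    {s : α → ℝ} (hs : Measurable s) {C : ℝ} (hC : ∀ a, |s a| ≤ C) :
    Tendsto (fun i ↦ ∫ a, s a ∂(μs i)) l (𝓝 (∫ a, s a ∂μ)) := by
  have hint (ρ : Measure α) [IsProbabilityMeasure ρ] : Integrable s ρ :=
    .of_bound hs.aestronglyMeasurable C (ae_of_all _ hC)
  refine Metric.tendsto_nhds.2 fun ε hε ↦ ?_
  obtain ⟨φ, hφ⟩ := exists_simpleFunc_forall_abs_sub_le hs hC (by positivity : 0 < ε / 4)
  have hφint (ρ : Measure α) [IsProbabilityMeasure ρ] := φ.integrable_of_isFiniteMeasure (μ := ρ)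
  have hsimple : Tendsto (fun i ↦ ∫ a, φ a ∂(μs i)) l (𝓝 (∫ a, φ a ∂μ)) := by
    simp only [SimpleFunc.integral_eq_sum _ (hφint _)]
    exact tendsto_finsetSum _ fun x _ ↦ (h _ (φ.measurableSet_fiber x)).smul_const x
  filter_upwards [Metric.tendsto_nhds.1 hsimple (ε / 4) (by positivity)] with i hi
  have hi' := abs_integral_sub_integral_le (hint (μs i)) (hφint (μs i)) hφ
  have hμ := abs_integral_sub_integral_le (hint μ) (hφint μ) hφ
  rw [dist_eq] at hi ⊢
  rw [abs_le] at hi' hμ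
  rw [abs_lt] at hi ⊢
  constructor <;> linarith

lemma TendstoSetwise.klDiv_le {μs : ι → Measure α} {l : Filter ι} {μ ν : Measure α}
    [∀ i, IsProbabilityMeasure (μs i)] [IsProbabilityMeasure μ] [IsFiniteMeasure ν]
    (h : TendstoSetwise μs l μ) {c : ℝ≥0∞} (hc : ∃ᶠ i in l, klDiv (μs i) ν ≤ c) :
    klDiv μ ν ≤ c := by
  rcases eq_or_ne c ∞ with rfl | hctop
  · exact le_top
  rw [← ENNReal.ofReal_toReal hctop]
  refine klDiv_le_of_forall_integral_sub_le fun s hs ⟨C, hC⟩ ↦ ?_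
  refine isClosed_Iic.mem_of_frequently_of_tendsto (hc.mono fun i hi ↦ ?_)
    ((h.tendsto_integral hs hC).sub_const _)
  exact (integral_sub_integral_exp_le_toReal_klDiv (hi.trans_lt hctop.lt_top).ne hs hC).trans
    (ENNReal.toReal_mono hctop hi)

/-- The content `E ↦ lim μs i E` along an ultrafilter, which exists by compactness of `[0, ∞]`. -/
noncomputable def ultraLimitContent (U : Ultrafilter ι) (μs : ι → Measure α) :
    AddContent ℝ≥0∞ {E : Set α | MeasurableSet E} where
  toFun E := (U.map fun i ↦ μs i E).lim
  empty' := tendsto_nhds_unique (U.map fun i ↦ μs i ∅).le_nhds_lim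
    (show Tendsto (fun i ↦ μs i ∅) U (𝓝 0) by simp)
  sUnion' I hI hdisj _ := by
    have hlim (E : Set α) : Tendsto (fun i ↦ μs i E) U (𝓝 (U.map fun i ↦ μs i E).lim) :=
      (U.map fun i ↦ μs i E).le_nhds_lim
    have hsum (i) : μs i (⋃₀ I) = ∑ E ∈ I, μs i E := by
      rw [Set.sUnion_eq_biUnion]
      exact measure_biUnion_finset hdisj fun E hE ↦ hI hE
    refine tendsto_nhds_unique (hlim (⋃₀ I)) ?_
    simp only [hsum]
    exact tendsto_finsetSum I fun E _ ↦ hlim E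

lemma tendsto_ultraLimitContent (U : Ultrafilter ι) (μs : ι → Measure α) (E : Set α) :
    Tendsto (fun i ↦ μs i E) U (𝓝 (ultraLimitContent U μs E)) :=
  (U.map fun i ↦ μs i E).le_nhds_lim

lemma ultraLimitContent_iUnion {U : Ultrafilter ι} {μs : ι → Measure α} {ν : Measure α}
    [∀ i, IsProbabilityMeasure (μs i)] [IsFiniteMeasure ν]
    (h : UniformlyAbsolutelyContinuous μs ν) {f : ℕ → Set α} (hf : ∀ i, MeasurableSet (f i))
    (hdisj : Pairwise (Function.onFun Disjoint f)) :
    ultraLimitContent U μs (⋃ i, f i) = ∑' i, ultraLimitContent U μs (f i) := by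
  have hring : IsSetRing {E : Set α | MeasurableSet E} :=
    ⟨.empty, fun _ _ ↦ .union, fun _ _ ↦ .diff⟩
  refine addContent_iUnion_eq_sum_of_tendsto_zero hring _ (fun E _ ↦ ?_) (fun E hE hanti hE0 ↦ ?_)
    hf (.iUnion hf) hdisj
  · exact ((le_of_tendsto (tendsto_ultraLimitContent U μs E)
      (.of_forall fun i ↦ prob_le_one)).trans_lt ENNReal.one_lt_top).ne
  · have hν : Tendsto (fun n ↦ ν (E n)) atTop (𝓝 0) := by
      simpa [hE0, Function.comp_def] using tendsto_measure_iInter_atTop (μ := ν)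
        (fun n ↦ (hE n : MeasurableSet (E n)).nullMeasurableSet) hanti ⟨0, measure_ne_top _ _⟩
    refine ENNReal.tendsto_nhds_zero.2 fun ε hε ↦ ?_
    obtain ⟨δ, hδ, hE'⟩ := h ε hε
    filter_upwards [ENNReal.tendsto_nhds_zero.1 hν δ hδ] with n hn
    exact le_of_tendsto (tendsto_ultraLimitContent U μs (E n)) (.of_forall (hE' _ (hE n) hn))

lemma UniformlyAbsolutelyContinuous.exists_tendstoSetwise {μs : ι → Measure α} {ν : Measure α}
    [∀ i, IsProbabilityMeasure (μs i)] [IsFiniteMeasure ν]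
    (h : UniformlyAbsolutelyContinuous μs ν) (U : Ultrafilter ι) :
    ∃ μ : Measure α, IsProbabilityMeasure μ ∧ TendstoSetwise μs U μ := by
  let μ : Measure α := .ofMeasurable (fun E _ ↦ ultraLimitContent U μs E)
    addContent_empty fun _ hf hdisj ↦ ultraLimitContent_iUnion h hf hdisj
  have hμ (E : Set α) (hE : MeasurableSet E) : Tendsto (fun i ↦ μs i E) U (𝓝 (μ E)) := by
    rw [Measure.ofMeasurable_apply E hE]
    exact tendsto_ultraLimitContent U μs E
  have hprob : IsProbabilityMeasure μ := ⟨by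
    simpa using tendsto_nhds_unique (hμ _ .univ) (by simp)⟩
  exact ⟨μ, hprob, fun E hE ↦ (ENNReal.tendsto_toReal (measure_ne_top μ E)).comp (hμ E hE)⟩

lemma uniformlyAbsolutelyContinuous_of_klDiv_le {μs : ι → Measure α} {ν : Measure α}
    [∀ i, IsFiniteMeasure (μs i)] [IsFiniteMeasure ν] {c : ℝ}
    (h : ∀ i, klDiv (μs i) ν ≤ ENNReal.ofReal c) : UniformlyAbsolutelyContinuous μs ν := by
  intro ε hε
  obtain ⟨r, hr, hrε⟩ := ENNReal.lt_iff_exists_nnreal_btwn.1 hε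
  have hr : 0 < (r : ℝ) := by exact_mod_cast hr
  let l : ℝ := 2 * |c| / r + 1
  have hl : 0 < l := by positivity
  have hcl : |c| / l ≤ r / 2 := by
    rw [div_le_div_iff₀ hl two_pos]
    nlinarith [div_mul_cancel₀ (2 * |c|) hr.ne']
  refine ⟨ENNReal.ofReal (r / 2 * l / exp l), by positivity, fun E hE hνE i ↦ ?_⟩
  have hkl : (klDiv (μs i) ν).toReal ≤ |c| := ENNReal.toReal_le_of_le_ofReal (abs_nonneg c)
    ((h i).trans (ENNReal.ofReal_le_ofReal (le_abs_self c)))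
  have hν : ν.real E * exp l ≤ r / 2 * l :=
    (le_div_iff₀ (exp_pos l)).1 (ENNReal.toReal_le_of_le_ofReal (by positivity) hνE)
  have hreal : (μs i).real E ≤ r := calc
    (μs i).real E ≤ ((klDiv (μs i) ν).toReal + (exp l - 1) * ν.real E) / l :=
      measureReal_le_of_klDiv_ne_top ((h i).trans_lt ENNReal.ofReal_lt_top).ne hE hl
    _ ≤ (|c| + r / 2 * l) / l := by
      refine div_le_div_of_nonneg_right ?_ hl.le
      nlinarith [measureReal_nonneg (μ := ν) (s := E)]
    _ = |c| / l + r / 2 := by rw [add_div, mul_div_cancel_right₀ _ hl.ne']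
    _ ≤ r := by linarith
  refine le_trans ?_ hrε.le
  rw [← ofReal_measureReal, ← ENNReal.ofReal_coe_nnreal]
  exact ENNReal.ofReal_le_ofReal hreal

end SetwiseConvergence

section FiniteMarginals

variable {α T : Type*} [MeasurableSpace α]

/-- The weights `t ↦ μ (f = t)` of the image of `μ` under a map `f` to a finite type. -/
noncomputable def marginal (f : α → T) (μ : Measure α) (t : T) : ℝ := μ.real (f ⁻¹' {t})

lemma marginal_nonneg (f : α → T) (μ : Measure α) (t : T) : 0 ≤ marginal f μ t :=
  measureReal_nonneg

/-- The measure with weights `m` whose conditional laws on the fibres of `f` are those of `ν`. -/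
noncomputable def withMarginal (f : α → T) (ν : Measure α) (m : T → ℝ) : Measure α :=
  ν.withDensity fun a ↦ ENNReal.ofReal (m (f a) / marginal f ν (f a))

variable [MeasurableSpace T] [MeasurableSingletonClass T] {f : α → T} {ν : Measure α}
  {m : T → ℝ}

lemma marginal_withMarginal (hf : Measurable f) (hν : ∀ t, 0 < marginal f ν t)
    (hm : ∀ t, 0 ≤ m t) : marginal f (withMarginal f ν m) = m := by
  ext t
  have hE : MeasurableSet (f ⁻¹' {t}) := hf (measurableSet_singleton t)
  have hcongr : ∫⁻ a in f ⁻¹' {t}, ENNReal.ofReal (m (f a) / marginal f ν (f a)) ∂ν =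
      ∫⁻ _ in f ⁻¹' {t}, ENNReal.ofReal (m t / marginal f ν t) ∂ν :=
    setLIntegral_congr_fun hE fun a (ha : f a = t) ↦ by simp only [ha]
  rw [marginal, measureReal_def, withMarginal, withDensity_apply _ hE, hcongr, setLIntegral_const,
    ENNReal.toReal_mul, ENNReal.toReal_ofReal (div_nonneg (hm t) (hν t).le)]
  exact div_mul_cancel₀ _ (hν t).ne'

variable [Fintype T]

/-- The relative entropy `∑ m log (m / v)` of two families of weights on a finite type; it is the
usual one when `v` is positive. -/
noncomputable def relEntropySum (m v : T → ℝ) : ℝ := ∑ t, m t * log (m t / v t)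

lemma integral_comp_eq_sum_marginal (hf : Measurable f) (μ : Measure α)
    [IsFiniteMeasure μ] (g : T → ℝ) : ∫ a, g (f a) ∂μ = ∑ t, marginal f μ t * g t := by
  rw [← integral_map hf.aemeasurable (measurable_of_finite g).aestronglyMeasurable,
    integral_fintype .of_finite]
  simp only [map_measureReal_apply hf (measurableSet_singleton _), smul_eq_mul, marginal]

lemma sum_marginal (hf : Measurable f) (μ : Measure α) [IsProbabilityMeasure μ] :
    ∑ t, marginal f μ t = 1 := by
  simpa using (integral_comp_eq_sum_marginal hf μ fun _ ↦ (1 : ℝ)).symm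

lemma lintegral_comp_eq_ofReal_sum_marginal (hf : Measurable f) (μ : Measure α)
    [IsFiniteMeasure μ] {g : T → ℝ} (hg : ∀ t, 0 ≤ g t) :
    ∫⁻ a, ENNReal.ofReal (g (f a)) ∂μ = ENNReal.ofReal (∑ t, marginal f μ t * g t) := by
  rw [← integral_comp_eq_sum_marginal hf, ofReal_integral_eq_lintegral_ofReal _
    (ae_of_all _ fun a ↦ hg (f a))]
  exact .comp_measurable (μ := μ) (g := g) .of_finite hf

lemma isProbabilityMeasure_withMarginal [IsFiniteMeasure ν] (hf : Measurable f)
    (hν : ∀ t, 0 < marginal f ν t) (hm : ∀ t, 0 ≤ m t) (hm1 : ∑ t, m t = 1) :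
    IsProbabilityMeasure (withMarginal f ν m) := by
  constructor
  rw [withMarginal, withDensity_apply _ .univ, Measure.restrict_univ,
    lintegral_comp_eq_ofReal_sum_marginal hf ν (g := fun t ↦ m t / marginal f ν t)
      fun t ↦ div_nonneg (hm t) (hν t).le]
  simp only [mul_div_cancel₀ _ (hν _).ne', hm1, ENNReal.ofReal_one]

lemma mul_klFun_div (x : ℝ) {y : ℝ} (hy : 0 < y) :
    y * klFun (x / y) = x * log (x / y) + y - x := by
  rw [klFun]; field_simp

lemma klDiv_withMarginal [IsProbabilityMeasure ν] (hf : Measurable f)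
    (hν : ∀ t, 0 < marginal f ν t) (hm : ∀ t, 0 ≤ m t) (hm1 : ∑ t, m t = 1) :
    klDiv (withMarginal f ν m) ν = ENNReal.ofReal (relEntropySum m (marginal f ν)) := by
  have := isProbabilityMeasure_withMarginal hf hν hm hm1
  have hdiv (t : T) : 0 ≤ m t / marginal f ν t := div_nonneg (hm t) (hν t).le
  have hdens : Measurable fun a ↦ ENNReal.ofReal (m (f a) / marginal f ν (f a)) :=
    (measurable_of_finite fun t ↦ ENNReal.ofReal (m t / marginal f ν t)).comp hf
  calc klDiv (withMarginal f ν m) ν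
      = ∫⁻ a, ENNReal.ofReal (klFun (((withMarginal f ν m).rnDeriv ν a).toReal)) ∂ν :=
        klDiv_eq_lintegral_klFun_of_ac (withDensity_absolutelyContinuous _ _)
    _ = ∫⁻ a, ENNReal.ofReal (klFun (m (f a) / marginal f ν (f a))) ∂ν := by
        refine lintegral_congr_ae ?_
        filter_upwards [ν.rnDeriv_withDensity hdens] with a ha
        rw [withMarginal, ha, ENNReal.toReal_ofReal (hdiv _)]
    _ = ENNReal.ofReal (∑ t, marginal f ν t * klFun (m t / marginal f ν t)) :=
        lintegral_comp_eq_ofReal_sum_marginal hf ν fun t ↦ klFun_nonneg (hdiv t)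
    _ = ENNReal.ofReal (relEntropySum m (marginal f ν)) := by
        simp only [mul_klFun_div _ (hν _), Finset.sum_sub_distrib, Finset.sum_add_distrib, hm1,
          sum_marginal hf ν, add_sub_cancel_right, relEntropySum]

lemma relEntropySum_marginal_le {μ : Measure α} [IsProbabilityMeasure μ] [IsProbabilityMeasure ν]
    (hf : Measurable f) (hν : ∀ t, 0 < marginal f ν t) :
    ENNReal.ofReal (relEntropySum (marginal f μ) (marginal f ν)) ≤ klDiv μ ν := by
  have hid (ρ : Measure α) : marginal id (ρ.map f) = marginal f ρ := by
    ext t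
    exact map_measureReal_apply hf (measurableSet_singleton t)
  have := Measure.isProbabilityMeasure_map (μ := μ) hf.aemeasurable
  have := Measure.isProbabilityMeasure_map (μ := ν) hf.aemeasurable
  have hmap : withMarginal id (ν.map f) (marginal f μ) = μ.map f := by
    have := isProbabilityMeasure_withMarginal (ν := ν.map f) measurable_id (by simpa only [hid])
      (marginal_nonneg f μ) (sum_marginal hf μ)
    refine Measure.ext_of_singleton fun t ↦ ?_
    rw [← measureReal_eq_measureReal_iff]
    exact congrFun ((marginal_withMarginal measurable_id (by simpa only [hid])
      (marginal_nonneg f μ)).trans (hid μ).symm) t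
  rw [← hid ν, ← klDiv_withMarginal measurable_id (by simpa only [hid]) (marginal_nonneg f μ)
    (sum_marginal hf μ), hmap]
  exact klDiv_map_le μ ν hf

end FiniteMarginals

section FiniteSanov

lemma eventually_mul_pow_mul_exp_le (K : ℝ) (d : ℕ) {a b : ℝ} (hab : a < b) :
    ∀ᶠ n : ℕ in atTop, K * ((n : ℝ) + 1) ^ d * exp (-(n * b)) ≤ exp (-(n * a)) := by
  have hb : 0 < b - a := sub_pos.2 hab
  have hlim : Tendsto (fun n : ℕ ↦ K * (((n : ℝ) + 1) ^ d * exp (-(b - a) * (n + 1))))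
      atTop (𝓝 (K * 0)) :=
    (((tendsto_rpow_mul_exp_neg_mul_atTop_nhds_zero d (b - a) hb).comp
      (tendsto_atTop_add_const_right _ 1 tendsto_natCast_atTop_atTop)).const_mul K).congr
        fun n ↦ by simp
  rw [mul_zero] at hlim
  filter_upwards [hlim.eventually_le_const (exp_pos (-(b - a)))] with n hn
  have hsplit : exp (-(n * b)) = exp (-(b - a) * (n + 1)) * exp (b - a) * exp (-(n * a)) := by
    rw [← exp_add, ← exp_add]; congr 1; ring
  calc K * ((n : ℝ) + 1) ^ d * exp (-(n * b))
      = K * (((n : ℝ) + 1) ^ d * exp (-(b - a) * (n + 1))) * exp (b - a) * exp (-(n * a)) := by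
        rw [hsplit]; ring
    _ ≤ exp (-(b - a)) * exp (b - a) * exp (-(n * a)) := by gcongr
    _ = exp (-(n * a)) := by rw [← exp_add, neg_add_cancel, exp_zero, one_mul]

variable {T : Type*} {n : ℕ}

section

variable [Fintype T]

lemma sum_prod_comp (g : Fin n → T → ℝ) :
    ∑ τ : Fin n → T, ∏ i, g i (τ i) = ∏ i, ∑ t, g i t := by
  rw [Finset.prod_univ_sum, Fintype.piFinset_univ]

lemma sum_prod_mul_mul_le {m x : T → ℝ} (hm : ∀ t, 0 ≤ m t) (hm1 : ∑ t, m t = 1)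
    (hx0 : ∑ t, m t * x t = 0) (hx2 : ∀ t, x t ^ 2 ≤ 1) (i j : Fin n) :
    ∑ τ : Fin n → T, (∏ l, m (τ l)) * (x (τ i) * x (τ j)) ≤ if i = j then 1 else 0 := by
  have hterm (τ : Fin n → T) : (∏ l, m (τ l)) * (x (τ i) * x (τ j)) =
      ∏ l, m (τ l) * (if l = i then x (τ l) else 1) * (if l = j then x (τ l) else 1) := by
    simp only [Finset.prod_mul_distrib, Finset.prod_ite_eq', Finset.mem_univ, if_true, mul_assoc]
  simp only [hterm]
  rw [sum_prod_comp fun l s ↦ m s * (if l = i then x s else 1) * (if l = j then x s else 1)]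
  split_ifs with hij
  · subst hij
    have hfactor (l : Fin n) (t : T) :
        (if l = i then x t else 1) * (if l = i then x t else 1) = if l = i then x t ^ 2 else 1 := by
      split_ifs <;> ring
    simp only [mul_assoc, hfactor]
    refine Finset.prod_le_one (fun l _ ↦ Finset.sum_nonneg fun t _ ↦ ?_) fun l _ ↦ ?_
    · exact mul_nonneg (hm t) (by split_ifs <;> positivity)
    · refine (Finset.sum_le_sum fun t _ ↦ mul_le_of_le_one_right (hm t) ?_).trans hm1.le
      split_ifs
      exacts [hx2 t, le_rfl]
  · refine (Finset.prod_eq_zero (Finset.mem_univ i) ?_).le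
    simpa only [if_true, if_neg hij, mul_one] using hx0

lemma sum_prod_mul_sum_sq_le {m x : T → ℝ} (hm : ∀ t, 0 ≤ m t) (hm1 : ∑ t, m t = 1)
    (hx0 : ∑ t, m t * x t = 0) (hx2 : ∀ t, x t ^ 2 ≤ 1) :
    ∑ τ : Fin n → T, (∏ i, m (τ i)) * (∑ i, x (τ i)) ^ 2 ≤ n := by
  calc ∑ τ : Fin n → T, (∏ i, m (τ i)) * (∑ i, x (τ i)) ^ 2
      = ∑ i : Fin n, ∑ j : Fin n, ∑ τ : Fin n → T, (∏ l, m (τ l)) * (x (τ i) * x (τ j)) := by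
        simp only [sq, Finset.sum_mul_sum]
        simp only [Finset.mul_sum]
        rw [Finset.sum_comm]
        exact Finset.sum_congr rfl fun i _ ↦ Finset.sum_comm
    _ ≤ ∑ i : Fin n, ∑ j : Fin n, if i = j then 1 else 0 :=
        Finset.sum_le_sum fun i _ ↦ Finset.sum_le_sum fun j _ ↦
          sum_prod_mul_mul_le hm hm1 hx0 hx2 i j
    _ = n := by simp

lemma tendsto_sum_abs_log_div {u : ℕ → T → ℝ} {v : T → ℝ} (hv : ∀ t, 0 < v t)
    (huv : ∀ t, Tendsto (fun n ↦ u n t) atTop (𝓝 (v t))) :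
    Tendsto (fun n ↦ ∑ t, |log (u n t / v t)|) atTop (𝓝 0) := by
  rw [show (0 : ℝ) = ∑ t, |log (v t / v t)| by simp [div_self (hv _).ne']]
  exact tendsto_finsetSum _ fun t _ ↦ (((huv t).div_const _).log
    (div_pos (hv t) (hv t)).ne').abs

end

variable [DecidableEq T]

/-- The empirical distribution of a word `τ` of length `n`: the proportion of each letter. -/
noncomputable def empirical (τ : Fin n → T) (t : T) : ℝ :=
  (Finset.univ.filter fun i ↦ τ i = t).card / n

lemma empirical_nonneg (τ : Fin n → T) (t : T) : 0 ≤ empirical τ t := by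
  unfold empirical; positivity

lemma empirical_apply_pos (τ : Fin n → T) (i : Fin n) : 0 < empirical τ (τ i) := by
  have hcard : 0 < (Finset.univ.filter fun j ↦ τ j = τ i).card :=
    Finset.card_pos.2 ⟨i, by simp⟩
  have hn : 0 < n := i.pos
  unfold empirical; positivity

lemma empirical_eq_zero {τ : Fin n → T} {t : T} (h : ∀ i, τ i ≠ t) : empirical τ t = 0 := by
  simp [empirical, h]

lemma empirical_le_one (τ : Fin n → T) (t : T) : empirical τ t ≤ 1 :=
  div_le_one_of_le₀ (mod_cast (Finset.card_le_univ _).trans_eq (Fintype.card_fin n)) n.cast_nonneg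

variable [Fintype T]

lemma sum_comp_eq_sum_empirical (τ : Fin n → T) (g : T → ℝ) :
    ∑ i, g (τ i) = n * ∑ t, empirical τ t * g t := by
  rcases n.eq_zero_or_pos with rfl | hn
  · simp
  rw [← Finset.sum_fiberwise (s := Finset.univ) (g := τ), Finset.mul_sum]
  refine Finset.sum_congr rfl fun t _ ↦ ?_
  rw [Finset.sum_congr rfl fun i hi ↦ by rw [(Finset.mem_filter.1 hi).2], Finset.sum_const,
    nsmul_eq_mul, empirical]
  field_simp

lemma sum_empirical (hn : 0 < n) (τ : Fin n → T) : ∑ t, empirical τ t = 1 := by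
  have h := sum_comp_eq_sum_empirical τ fun _ ↦ (1 : ℝ)
  simp only [mul_one, Finset.sum_const, Finset.card_univ, Fintype.card_fin, nsmul_eq_mul] at h
  exact (mul_eq_left₀ (by positivity)).1 h.symm

/-- The words are grouped by their empirical distribution `c`: there are at most `(n + 1) ^ |T|`
groups, and each has weight at most `1` under the product of the letter probabilities `c`. -/
lemma sum_prod_empirical_le :
    ∑ τ : Fin n → T, ∏ i, empirical τ (τ i) ≤ ((n : ℝ) + 1) ^ Fintype.card T := by
  classical
  rcases n.eq_zero_or_pos with rfl | hn
  · simp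
  let count (τ : Fin n → T) (t : T) : Fin (n + 1) :=
    ⟨(Finset.univ.filter fun i ↦ τ i = t).card,
      Nat.lt_succ_of_le ((Finset.card_le_univ _).trans_eq (Fintype.card_fin n))⟩
  obtain ⟨freq, hfreq⟩ : ∃ freq : (T → Fin (n + 1)) → T → ℝ, ∀ c t, freq c t = (c t : ℕ) / n :=
    ⟨_, fun _ _ ↦ rfl⟩
  have hfreq0 (c : T → Fin (n + 1)) (t : T) : 0 ≤ freq c t := by rw [hfreq]; positivity
  have hcount (τ : Fin n → T) : freq (count τ) = empirical τ := funext fun t ↦ hfreq _ t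
  calc ∑ τ : Fin n → T, ∏ i, empirical τ (τ i)
      ≤ ∑ τ : Fin n → T, ∑ c with ∑ t, freq c t = 1, ∏ i, freq c (τ i) :=
        Finset.sum_le_sum fun τ _ ↦ hcount τ ▸
          Finset.single_le_sum (f := fun c ↦ ∏ i, freq c (τ i))
            (fun c _ ↦ Finset.prod_nonneg fun i _ ↦ hfreq0 c (τ i))
            (Finset.mem_filter.2 ⟨Finset.mem_univ (count τ), by rw [hcount, sum_empirical hn]⟩)
    _ = ∑ c with ∑ t, freq c t = 1, ∏ _i : Fin n, ∑ t, freq c t := by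
        rw [Finset.sum_comm]
        exact Finset.sum_congr rfl fun c _ ↦ sum_prod_comp fun _ t ↦ freq c t
    _ = (Finset.univ.filter fun c ↦ ∑ t, freq c t = 1).card := by
        rw [Finset.sum_congr rfl fun c hc ↦ by rw [(Finset.mem_filter.1 hc).2], Finset.prod_const,
          one_pow, Finset.sum_const, nsmul_one]
    _ ≤ ((n : ℝ) + 1) ^ Fintype.card T := by
        exact_mod_cast (Finset.card_le_univ _).trans_eq (by simp)

lemma prod_eq_prod_empirical_mul_exp {u : T → ℝ} (τ : Fin n → T) (hu : ∀ i, 0 < u (τ i)) :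
    ∏ i, u (τ i) = (∏ i, empirical τ (τ i)) * exp (-(n * relEntropySum (empirical τ) u)) := by
  rw [relEntropySum, ← sum_comp_eq_sum_empirical τ fun t ↦ log (empirical τ t / u t),
    ← Finset.sum_neg_distrib, exp_sum, ← Finset.prod_mul_distrib]
  refine Finset.prod_congr rfl fun i _ ↦ ?_
  have hpos := empirical_apply_pos τ i
  rw [exp_neg, exp_log (div_pos hpos (hu i)), inv_div, mul_div_cancel₀ _ hpos.ne']

lemma sum_prod_le_of_le_relEntropySum {u : T → ℝ} (hu : ∀ t, 0 ≤ u t) {E : Finset (Fin n → T)}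
    {a : ℝ} (h : ∀ τ ∈ E, (∀ i, 0 < u (τ i)) → a ≤ relEntropySum (empirical τ) u) :
    ∑ τ ∈ E, ∏ i, u (τ i) ≤ ((n : ℝ) + 1) ^ Fintype.card T * exp (-(n * a)) := by
  have hterm (τ : Fin n → T) (hτ : τ ∈ E) :
      ∏ i, u (τ i) ≤ (∏ i, empirical τ (τ i)) * exp (-(n * a)) := by
    have hemp : 0 ≤ ∏ i, empirical τ (τ i) := Finset.prod_nonneg fun i _ ↦ empirical_nonneg τ _
    by_cases hpos : ∀ i, 0 < u (τ i)
    · rw [prod_eq_prod_empirical_mul_exp τ hpos]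
      gcongr
      exact h τ hτ hpos
    · obtain ⟨i, hi⟩ := not_forall.1 hpos
      rw [Finset.prod_eq_zero (Finset.mem_univ i) (le_antisymm (not_lt.1 hi) (hu _))]
      positivity
  calc ∑ τ ∈ E, ∏ i, u (τ i)
      ≤ ∑ τ ∈ E, (∏ i, empirical τ (τ i)) * exp (-(n * a)) := Finset.sum_le_sum hterm
    _ ≤ (∑ τ, ∏ i, empirical τ (τ i)) * exp (-(n * a)) := by
        rw [← Finset.sum_mul]
        gcongr
        · exact fun i _ _ ↦ Finset.prod_nonneg fun i _ ↦ empirical_nonneg _ _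
        · exact E.subset_univ
    _ ≤ ((n : ℝ) + 1) ^ Fintype.card T * exp (-(n * a)) := by
        gcongr
        exact sum_prod_empirical_le

lemma sum_prod_mul_empirical_sub_sq_le (hn : 0 < n) {m : T → ℝ} (hm : ∀ t, 0 ≤ m t)
    (hm1 : ∑ t, m t = 1) (t : T) :
    ∑ τ : Fin n → T, (∏ i, m (τ i)) * (empirical τ t - m t) ^ 2 ≤ 1 / n := by
  set x : T → ℝ := fun s ↦ (if s = t then 1 else 0) - m t with hx
  have hmt : m t ≤ 1 := hm1 ▸ Finset.single_le_sum (fun s _ ↦ hm s) (Finset.mem_univ t)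
  have hx0 : ∑ s, m s * x s = 0 := by
    simp [hx, mul_sub, Finset.sum_sub_distrib, ← Finset.sum_mul, hm1]
  have hx2 (s : T) : x s ^ 2 ≤ 1 := by
    have := hm t
    simp only [hx]
    split_ifs <;> nlinarith
  have hsum (τ : Fin n → T) : empirical τ t - m t = (∑ i, x (τ i)) / n := by
    rw [Finset.sum_sub_distrib, Finset.sum_boole, Finset.sum_const, Finset.card_univ,
      Fintype.card_fin, nsmul_eq_mul, empirical]
    field_simp
  simp only [hsum, div_pow, ← mul_div_assoc, ← Finset.sum_div]
  calc (∑ τ : Fin n → T, (∏ i, m (τ i)) * (∑ i, x (τ i)) ^ 2) / (n : ℝ) ^ (2 : ℕ)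
      ≤ (n : ℝ) / (n : ℝ) ^ (2 : ℕ) := by gcongr; exact sum_prod_mul_sum_sq_le hm hm1 hx0 hx2
    _ = 1 / n := by field_simp

lemma one_sub_le_sum_prod_of_near (hn : 0 < n) {m : T → ℝ} (hm : ∀ t, 0 ≤ m t)
    (hm1 : ∑ t, m t = 1) {η : ℝ} (hη : 0 < η) :
    1 - Fintype.card T / (n * η ^ 2) ≤
      ∑ τ : Fin n → T with ∀ t, |empirical τ t - m t| ≤ η, ∏ i, m (τ i) := by
  have htotal : ∑ τ : Fin n → T, ∏ i, m (τ i) = 1 := by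
    rw [sum_prod_comp fun _ t ↦ m t]
    simp [hm1]
  have hprod (τ : Fin n → T) : 0 ≤ ∏ i, m (τ i) := Finset.prod_nonneg fun i _ ↦ hm _
  have hsq (τ : Fin n → T) (t : T) : 0 ≤ (∏ i, m (τ i)) * (empirical τ t - m t) ^ 2 :=
    mul_nonneg (hprod τ) (sq_nonneg _)
  have hfar : ∑ τ : Fin n → T with ¬ ∀ t, |empirical τ t - m t| ≤ η, ∏ i, m (τ i) ≤
      Fintype.card T / (n * η ^ 2) :=
    calc ∑ τ : Fin n → T with ¬ ∀ t, |empirical τ t - m t| ≤ η, ∏ i, m (τ i)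
        ≤ ∑ τ : Fin n → T with ¬ ∀ t, |empirical τ t - m t| ≤ η,
            ∑ t, (∏ i, m (τ i)) * (empirical τ t - m t) ^ 2 / η ^ 2 := by
          refine Finset.sum_le_sum fun τ hτ ↦ ?_
          obtain ⟨t, ht⟩ := not_forall.1 (Finset.mem_filter.1 hτ).2
          refine le_trans ?_ (Finset.single_le_sum (fun t _ ↦ div_nonneg (hsq τ t) (sq_nonneg η))
            (Finset.mem_univ t))
          rw [le_div_iff₀ (by positivity), ← sq_abs (empirical τ t - m t)]
          have := hprod τ
          gcongr
          exact (not_le.1 ht).le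
      _ ≤ ∑ τ : Fin n → T, ∑ t, (∏ i, m (τ i)) * (empirical τ t - m t) ^ 2 / η ^ 2 :=
          Finset.sum_le_sum_of_subset_of_nonneg (Finset.filter_subset _ _) fun τ _ _ ↦
            Finset.sum_nonneg fun t _ ↦ div_nonneg (hsq τ t) (sq_nonneg η)
      _ ≤ ∑ _t : T, 1 / n / η ^ 2 := by
          rw [Finset.sum_comm]
          refine Finset.sum_le_sum fun t _ ↦ ?_
          rw [← Finset.sum_div]
          gcongr
          exact sum_prod_mul_empirical_sub_sq_le hn hm hm1 t
      _ = Fintype.card T / (n * η ^ 2) := by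
          rw [Finset.sum_const, nsmul_eq_mul, Finset.card_univ]
          field_simp
  rw [← Finset.sum_filter_add_sum_filter_not _ fun τ ↦ ∀ t, |empirical τ t - m t| ≤ η] at htotal
  linarith

lemma prod_mul_exp_le_prod {m u : T → ℝ} (hm : ∀ t, 0 ≤ m t) (hu : ∀ t, 0 < u t) {η : ℝ}
    {τ : Fin n → T} (hτ : ∀ t, |empirical τ t - m t| ≤ η) :
    (∏ i, m (τ i)) * exp (-(n * (relEntropySum m u + η * ∑ t, |log (m t / u t)|))) ≤
      ∏ i, u (τ i) := by
  by_cases hpos : ∀ i, 0 < m (τ i)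
  · have hsum : ∑ t, empirical τ t * log (m t / u t) ≤
        relEntropySum m u + η * ∑ t, |log (m t / u t)| := by
      rw [relEntropySum, Finset.mul_sum, ← Finset.sum_add_distrib]
      refine Finset.sum_le_sum fun t _ ↦ ?_
      have hdiff : (empirical τ t - m t) * log (m t / u t) ≤ η * |log (m t / u t)| := by
        refine (le_abs_self _).trans ?_
        rw [abs_mul]
        gcongr
        exact hτ t
      linarith
    have hratio : ∏ i, u (τ i) =
        (∏ i, m (τ i)) * exp (-(n * ∑ t, empirical τ t * log (m t / u t))) := by
      rw [← sum_comp_eq_sum_empirical τ fun t ↦ log (m t / u t), ← Finset.sum_neg_distrib,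
        exp_sum, ← Finset.prod_mul_distrib]
      refine Finset.prod_congr rfl fun i _ ↦ ?_
      rw [exp_neg, exp_log (div_pos (hpos i) (hu _)), inv_div, mul_div_cancel₀ _ (hpos i).ne']
    rw [hratio]
    have := Finset.prod_nonneg fun i (_ : i ∈ Finset.univ) ↦ hm (τ i)
    gcongr
  · obtain ⟨i, hi⟩ := not_forall.1 hpos
    rw [Finset.prod_eq_zero (Finset.mem_univ i) (le_antisymm (not_lt.1 hi) (hm _)), zero_mul]
    exact Finset.prod_nonneg fun i _ ↦ (hu _).le

lemma mul_exp_le_sum_prod_of_near (hn : 0 < n) {m u : T → ℝ} (hm : ∀ t, 0 ≤ m t)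
    (hm1 : ∑ t, m t = 1) (hu : ∀ t, 0 < u t) {η : ℝ} (hη : 0 < η) :
    (1 - Fintype.card T / (n * η ^ 2)) *
        exp (-(n * (relEntropySum m u + η * ∑ t, |log (m t / u t)|))) ≤
      ∑ τ : Fin n → T with ∀ t, |empirical τ t - m t| ≤ η, ∏ i, u (τ i) := by
  refine (mul_le_mul_of_nonneg_right (one_sub_le_sum_prod_of_near hn hm hm1 hη)
    (exp_pos _).le).trans ?_
  rw [Finset.sum_mul]
  exact Finset.sum_le_sum fun τ hτ ↦ prod_mul_exp_le_prod hm hu (Finset.mem_filter.1 hτ).2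

lemma relEntropySum_empirical_le_add (τ : Fin n → T) {u v : T → ℝ} (hu : ∀ i, 0 < u (τ i))
    (hv : ∀ t, 0 < v t) : relEntropySum (empirical τ) v ≤
      relEntropySum (empirical τ) u + ∑ t, |log (u t / v t)| := by
  rw [relEntropySum, relEntropySum, ← Finset.sum_add_distrib]
  refine Finset.sum_le_sum fun t _ ↦ ?_
  by_cases ht : ∃ i, τ i = t
  · obtain ⟨i, rfl⟩ := ht
    have hpos := empirical_apply_pos τ i
    have hlog : log (empirical τ (τ i) / v (τ i)) =
        log (empirical τ (τ i) / u (τ i)) + log (u (τ i) / v (τ i)) := by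
      rw [← log_mul (div_pos hpos (hu i)).ne' (div_pos (hu i) (hv _)).ne',
        div_mul_div_cancel₀ (hu i).ne']
    rw [hlog, mul_add]
    gcongr
    exact (mul_le_mul_of_nonneg_left (le_abs_self _) hpos.le).trans
      (mul_le_of_le_one_left (abs_nonneg _) (empirical_le_one τ _))
  · rw [empirical_eq_zero (not_exists.1 ht), zero_mul, zero_mul, zero_add]
    exact abs_nonneg _

lemma eventually_exp_le_sum_prod_of_near {m v : T → ℝ} {u : ℕ → T → ℝ} (hm : ∀ t, 0 ≤ m t)
    (hm1 : ∑ t, m t = 1) (hv : ∀ t, 0 < v t)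
    (huv : ∀ t, Tendsto (fun n ↦ u n t) atTop (𝓝 (v t))) {η ε : ℝ} (hη : 0 < η) (hε : 0 < ε) :
    ∀ᶠ n : ℕ in atTop, exp (-(n * (relEntropySum m v + ε))) ≤
      ∑ τ : Fin n → T with ∀ t, |empirical τ t - m t| ≤ η, ∏ i, u n (τ i) := by
  set h := relEntropySum m v
  set B := ∑ t, |log (m t / v t)|
  obtain ⟨η', hη'0, hη', hη'B⟩ : ∃ η' : ℝ, 0 < η' ∧ η' ≤ η ∧ η' * B < ε / 2 := by
    have hsmall : ∀ᶠ x in 𝓝[>] (0 : ℝ), x * B < ε / 2 :=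
      (((continuous_id.mul continuous_const).tendsto' 0 0 (zero_mul B)).eventually_lt_const
        (half_pos hε)).filter_mono nhdsWithin_le_nhds
    obtain ⟨x, hx, hx0, hxη⟩ := (hsmall.and (Ioc_mem_nhdsGT hη)).exists
    exact ⟨x, hx0, hxη, hx⟩
  have hlog (t : T) : Tendsto (fun n ↦ log (m t / u n t)) atTop (𝓝 (log (m t / v t))) := by
    rcases eq_or_ne (m t) 0 with h0 | h0
    · simp [h0]
    · exact (tendsto_const_nhds.div (huv t) (hv t).ne').log (div_ne_zero h0 (hv t).ne')
  have hentropy : Tendsto (fun n ↦ relEntropySum m (u n) + η' * ∑ t, |log (m t / u n t)|) atTop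
      (𝓝 (h + η' * B)) :=
    (tendsto_finsetSum _ fun t _ ↦ (hlog t).const_mul _).add
      ((tendsto_finsetSum _ fun t _ ↦ (hlog t).abs).const_mul _)
  have hmass : Tendsto (fun n : ℕ ↦ 1 - (Fintype.card T : ℝ) / (n * η' ^ 2)) atTop (𝓝 1) := by
    simpa using (tendsto_const_nhds.div_atTop (tendsto_natCast_atTop_atTop.atTop_mul_const
      (by positivity : 0 < η' ^ 2))).const_sub (1 : ℝ)
  filter_upwards [hentropy.eventually_lt_const (by linarith : h + η' * B < h + ε / 2),
    hmass.eventually_const_lt (by norm_num : (1 / 2 : ℝ) < 1), eventually_gt_atTop 0,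
    eventually_all.2 fun t ↦ (huv t).eventually_const_lt (hv t),
    eventually_mul_pow_mul_exp_le 2 0 (by linarith : h + ε / 2 < h + ε)]
    with n hHn hmassn hn hun hexp
  calc exp (-(n * (h + ε)))
      ≤ 1 / 2 * exp (-(n * (h + ε / 2))) := by rw [pow_zero] at hexp; linarith
    _ ≤ (1 - Fintype.card T / (n * η' ^ 2)) *
          exp (-(n * (relEntropySum m (u n) + η' * ∑ t, |log (m t / u n t)|))) := by gcongr
    _ ≤ ∑ τ : Fin n → T with ∀ t, |empirical τ t - m t| ≤ η', ∏ i, u n (τ i) :=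
        mul_exp_le_sum_prod_of_near hn hm hm1 hun hη'0
    _ ≤ ∑ τ : Fin n → T with ∀ t, |empirical τ t - m t| ≤ η, ∏ i, u n (τ i) :=
        Finset.sum_le_sum_of_subset_of_nonneg
          (Finset.monotone_filter_right _ fun τ _ hτ t ↦ (hτ t).trans hη')
          fun τ _ _ ↦ Finset.prod_nonneg fun i _ ↦ (hun _).le

end FiniteSanov

section FiniteTypeApproximation

variable {S α : Type*} [MeasurableSpace S] [MeasurableSpace α]

lemma measureReal_pi_comp_mem {ι T : Type*} [Fintype ι] [MeasurableSpace T]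
    [MeasurableSingletonClass T] {σ : S → T} (hσ : Measurable σ) (P : Measure S)
    [IsFiniteMeasure P] (E : Finset (ι → T)) :
    (Measure.pi fun _ : ι ↦ P).real {ω | σ ∘ ω ∈ E} = ∑ τ ∈ E, ∏ i, marginal σ P (τ i) := by
  have hpre (τ : ι → T) : (σ ∘ ·) ⁻¹' {τ} = Set.univ.pi fun i ↦ σ ⁻¹' {τ i} := by
    ext ω; simp [funext_iff]
  have hmeas (τ : ι → T) : MeasurableSet ((σ ∘ ·) ⁻¹' {τ} : Set (ι → S)) :=
    hpre τ ▸ .univ_pi fun i ↦ hσ (measurableSet_singleton _)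
  rw [show {ω : ι → S | σ ∘ ω ∈ E} = (σ ∘ ·) ⁻¹' (E : Set (ι → T)) from rfl,
    ← sum_measureReal_preimage_singleton E fun τ _ ↦ hmeas τ]
  simp only [hpre, measureReal_def, Measure.pi_pi, ENNReal.toReal_prod, marginal]

/-- The rate function which the contraction principle assigns to the functional `Φ`: the least
relative entropy with respect to `ν` of a law `μ` with `Φ μ = x`. -/
noncomputable def contractedEntropy (ν : Measure α) (Φ : Measure α → ℝ) (x : ℝ) : EReal :=
  ⨅ (μ : Measure α) (_ : IsProbabilityMeasure μ ∧ Φ μ = x), (klDiv μ ν : EReal)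

variable {T : ℕ → Type*} [∀ k, DecidableEq (T k)] [∀ k, MeasurableSpace (T k)]
  [∀ k, MeasurableSingletonClass (T k)]

/-- Approximation of a statistic `W n` of `n` samples from `P n` through finitely many types.
At level `k`, `σ k` and `ρ k` sort samples and points of the limit space into types whose
probabilities under `P n` converge to those under `ν`. A continuous function `F k` of the type
weights approximates both `W n`, up to errors of arbitrarily large exponential rate, and a
functional `Φ` of laws on the limit space, uniformly on entropy balls. -/
structure HasFiniteTypeApprox (P : ℕ → Measure S) (ν : Measure α) (σ : ∀ k, S → T k)
    (ρ : ∀ k, α → T k) (F : ∀ k, (T k → ℝ) → ℝ) (W : ∀ n, (Fin n → S) → ℝ)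
    (Φ : Measure α → ℝ) : Prop where
  measurable_left : ∀ k, Measurable (σ k)
  measurable_right : ∀ k, Measurable (ρ k)
  marginal_pos : ∀ k t, 0 < marginal (ρ k) ν t
  tendsto_marginal : ∀ k t,
    Tendsto (fun n ↦ marginal (σ k) (P n) t) atTop (𝓝 (marginal (ρ k) ν t))
  continuous : ∀ k, Continuous (F k)
  functional_approx : ∀ c δ : ℝ, 0 < δ → ∀ᶠ k in atTop, ∀ μ : Measure α,
    IsProbabilityMeasure μ → klDiv μ ν ≤ ENNReal.ofReal c → |F k (marginal (ρ k) μ) - Φ μ| ≤ δ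
  statistic_approx : ∀ B δ : ℝ, 0 < δ → ∀ᶠ k in atTop, ∀ᶠ n in atTop,
    (Measure.pi fun _ : Fin n ↦ P n).real {ω | δ < |F k (empirical (σ k ∘ ω)) - W n ω|} ≤
      exp (-(n * B))

namespace HasFiniteTypeApprox

variable {P : ℕ → Measure S} [∀ n, IsZeroOrProbabilityMeasure (P n)] {ν : Measure α}
  {σ : ∀ k, S → T k} {ρ : ∀ k, α → T k} {F : ∀ k, (T k → ℝ) → ℝ}
  {W : ∀ n, (Fin n → S) → ℝ} {Φ : Measure α → ℝ}

lemma eventually_sum_prod_le (h : HasFiniteTypeApprox P ν σ ρ F W Φ) (B : ℝ) {δ : ℝ} (hδ : 0 < δ) :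
    ∀ᶠ k in atTop, ∀ᶠ n in atTop, ∀ (E : Finset (Fin n → T k)) (A : Set ℝ),
      (∀ τ ∈ E, ∀ w, |F k (empirical τ) - w| ≤ δ → w ∈ A) →
      ∑ τ ∈ E, ∏ i, marginal (σ k) (P n) (τ i) ≤
        (Measure.pi fun _ : Fin n ↦ P n).real {ω | W n ω ∈ A} + exp (-(n * B)) := by
  filter_upwards [h.statistic_approx B δ hδ] with k hk
  filter_upwards [hk] with n hn E A hE
  rw [← measureReal_pi_comp_mem (h.measurable_left k)]
  refine (measureReal_mono fun ω hω ↦ ?_).trans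
    ((measureReal_union_le _ {ω | δ < |F k (empirical (σ k ∘ ω)) - W n ω|}).trans
      (add_le_add_right hn _))
  exact (le_or_gt _ δ).imp (hE _ hω _) id

lemma eventually_le_sum_prod (h : HasFiniteTypeApprox P ν σ ρ F W Φ) (B : ℝ) {δ : ℝ} (hδ : 0 < δ) :
    ∀ᶠ k in atTop, ∀ᶠ n in atTop, ∀ (E : Finset (Fin n → T k)) (A : Set ℝ),
      (∀ τ, ∀ w ∈ A, |F k (empirical τ) - w| ≤ δ → τ ∈ E) →
      (Measure.pi fun _ : Fin n ↦ P n).real {ω | W n ω ∈ A} ≤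
        ∑ τ ∈ E, ∏ i, marginal (σ k) (P n) (τ i) + exp (-(n * B)) := by
  filter_upwards [h.statistic_approx B δ hδ] with k hk
  filter_upwards [hk] with n hn E A hE
  rw [← measureReal_pi_comp_mem (h.measurable_left k)]
  refine (measureReal_mono fun ω hω ↦ ?_).trans
    ((measureReal_union_le _ {ω | δ < |F k (empirical (σ k ∘ ω)) - W n ω|}).trans
      (add_le_add_right hn _))
  exact (le_or_gt _ δ).imp (hE _ _ hω) id

variable [∀ k, Finite (T k)] [IsProbabilityMeasure ν]

lemma eventually_exp_le (h : HasFiniteTypeApprox P ν σ ρ F W Φ) {A : Set ℝ} {μ : Measure α}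
    [IsProbabilityMeasure μ] {c ε : ℝ} (hc : 0 ≤ c) (hε : 0 < ε)
    (hμ : klDiv μ ν ≤ ENNReal.ofReal c) (hA : Φ μ ∈ interior A) :
    ∀ᶠ n : ℕ in atTop, exp (-(n * (c + ε))) ≤
      (Measure.pi fun _ : Fin n ↦ P n).real {ω | W n ω ∈ A} := by
  have := fun k ↦ Fintype.ofFinite (T k)
  obtain ⟨r, hr, hball⟩ := Metric.isOpen_iff.1 isOpen_interior (Φ μ) hA
  obtain ⟨k, hk, hΦ⟩ := ((h.eventually_sum_prod_le (c + ε) (by positivity : 0 < r / 4)).and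
    (h.functional_approx c (r / 4) (by positivity))).exists
  set m := marginal (ρ k) μ
  obtain ⟨η, hη, hcont⟩ := Metric.continuous_iff.1 (h.continuous k) m (r / 4) (by positivity)
  have hentropy : relEntropySum m (marginal (ρ k) ν) ≤ c :=
    (ENNReal.ofReal_le_ofReal_iff hc).1
      ((relEntropySum_marginal_le (h.measurable_right k) (h.marginal_pos k)).trans hμ)
  filter_upwards [hk, eventually_exp_le_sum_prod_of_near (marginal_nonneg (ρ k) μ)
    (sum_marginal (h.measurable_right k) μ) (h.marginal_pos k) (h.tendsto_marginal k)
    (half_pos hη) (half_pos hε),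
    eventually_mul_pow_mul_exp_le 2 0 (by linarith : c + ε / 2 < c + ε)] with n hn hsanov hexp
  have hnear : ∀ τ ∈ Finset.univ.filter fun τ : Fin n → T k ↦ ∀ t, |empirical τ t - m t| ≤ η / 2,
      ∀ w, |F k (empirical τ) - w| ≤ r / 4 → w ∈ A := by
    intro τ hτ w hw
    have hdist : dist (empirical τ) m < η :=
      ((dist_pi_le_iff (by positivity)).2 (Finset.mem_filter.1 hτ).2).trans_lt (half_lt_self hη)
    have hF := hcont _ hdist
    have hμΦ := hΦ μ inferInstance hμ
    refine interior_subset (hball ?_)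
    rw [Metric.mem_ball, dist_comm, Real.dist_eq, abs_lt]
    rw [Real.dist_eq, abs_lt] at hF
    rw [abs_le] at hw hμΦ
    constructor <;> linarith
  have hmono : exp (-(n * (c + ε / 2))) ≤
      exp (-(n * (relEntropySum m (marginal (ρ k) ν) + ε / 2))) := by gcongr
  have := hn _ A hnear
  rw [pow_zero, mul_one] at hexp
  linarith

lemma exists_klDiv_le_and_near (h : HasFiniteTypeApprox P ν σ ρ F W Φ) {A : Set ℝ} {a δ : ℝ}
    (hδ : 0 < δ) (hA : ∃ᶠ n : ℕ in atTop, exp (-(n * a)) ≤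
      (Measure.pi fun _ : Fin n ↦ P n).real {ω | W n ω ∈ A}) :
    ∃ μ, IsProbabilityMeasure μ ∧ klDiv μ ν ≤ ENNReal.ofReal (a + δ) ∧
      ∃ w ∈ A, |Φ μ - w| ≤ 2 * δ := by
  have := fun k ↦ Fintype.ofFinite (T k)
  classical
  obtain ⟨k, hk, hΦ⟩ := ((h.eventually_le_sum_prod (a + δ) hδ).and
    (h.functional_approx (a + δ) δ hδ)).exists
  have hv := h.marginal_pos k
  obtain ⟨n, hle, hn, hlog, hpoly, hexp, hn0⟩ := (hA.and_eventually (hk.and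
    (((tendsto_sum_abs_log_div hv (h.tendsto_marginal k)).eventually_lt_const
      (half_pos hδ)).and ((eventually_mul_pow_mul_exp_le 3 (Fintype.card (T k))
        (by linarith : a < a + δ / 2)).and ((eventually_mul_pow_mul_exp_le 3 0
          (by linarith : a < a + δ)).and (eventually_gt_atTop 0)))))).exists
  set u := marginal (σ k) (P n)
  set E := Finset.univ.filter fun τ : Fin n → T k ↦ ∃ w ∈ A, |F k (empirical τ) - w| ≤ δ
  obtain ⟨τ, hτ, hpos, hent⟩ : ∃ τ ∈ E, (∀ i, 0 < u (τ i)) ∧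
      relEntropySum (empirical τ) u ≤ a + δ / 2 := by
    by_contra! hcon
    have hsanov := sum_prod_le_of_le_relEntropySum (marginal_nonneg (σ k) (P n))
      fun τ hτ hpos ↦ (hcon τ hτ hpos).le
    have := hn E A fun τ w hw hτ ↦ Finset.mem_filter.2 ⟨Finset.mem_univ τ, w, hw, hτ⟩
    rw [pow_zero, mul_one] at hexp
    linarith [exp_pos (-(n * a))]
  obtain ⟨w, hw, hFw⟩ := (Finset.mem_filter.1 hτ).2
  have hemp := empirical_nonneg τ
  have hemp1 := sum_empirical hn0 τ
  have hμ := isProbabilityMeasure_withMarginal (h.measurable_right k) hv hemp hemp1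
  have hkl : klDiv (withMarginal (ρ k) ν (empirical τ)) ν ≤ ENNReal.ofReal (a + δ) := by
    rw [klDiv_withMarginal (h.measurable_right k) hv hemp hemp1]
    exact ENNReal.ofReal_le_ofReal (by linarith [relEntropySum_empirical_le_add τ hpos hv])
  refine ⟨_, hμ, hkl, w, hw, ?_⟩
  have hΦμ := hΦ _ hμ hkl
  rw [marginal_withMarginal (h.measurable_right k) hv hemp, abs_sub_comm] at hΦμ
  linarith [abs_sub_le (Φ (withMarginal (ρ k) ν (empirical τ))) (F k (empirical τ)) w]

lemma exists_klDiv_le_mem_closure (h : HasFiniteTypeApprox P ν σ ρ F W Φ) {A : Set ℝ} {a : ℝ}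
    (hA : ∃ᶠ n : ℕ in atTop, exp (-(n * a)) ≤
      (Measure.pi fun _ : Fin n ↦ P n).real {ω | W n ω ∈ A}) :
    ∃ μ, IsProbabilityMeasure μ ∧ klDiv μ ν ≤ ENNReal.ofReal a ∧ Φ μ ∈ closure A := by
  set δ : ℕ → ℝ := fun m ↦ 1 / ((m : ℝ) + 1)
  have hδ (m : ℕ) : 0 < δ m := Nat.one_div_pos_of_nat
  have hδ_lim : Tendsto δ atTop (𝓝 0) := tendsto_one_div_add_atTop_nhds_zero_nat
  have hδ_le (m : ℕ) : δ m ≤ 1 := by simpa [δ] using Nat.one_div_le_one_div (α := ℝ) m.zero_le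
  choose μs hμs hkl w hw hΦw using fun m ↦ h.exists_klDiv_le_and_near (hδ m) hA
  have hkl1 (m : ℕ) : klDiv (μs m) ν ≤ ENNReal.ofReal (a + 1) :=
    (hkl m).trans (ENNReal.ofReal_le_ofReal (by linarith [hδ_le m]))
  set U := hyperfilter ℕ
  have hU : (U : Filter ℕ) ≤ atTop := Nat.hyperfilter_le_atTop
  obtain ⟨μ, hμ, hlim⟩ :=
    (uniformlyAbsolutelyContinuous_of_klDiv_le hkl1).exists_tendstoSetwise U
  have hμkl : klDiv μ ν ≤ ENNReal.ofReal a := by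
    refine ge_of_tendsto' (ENNReal.tendsto_ofReal (by simpa using hδ_lim.const_add a)) fun j ↦
      hlim.klDiv_le (Eventually.frequently (hU (?_ : ∀ᶠ i in atTop, _)))
    filter_upwards [eventually_ge_atTop j] with i hij
    exact (hkl i).trans (ENNReal.ofReal_le_ofReal (by gcongr; exact Nat.one_div_le_one_div hij))
  refine ⟨μ, hμ, hμkl, Metric.mem_closure_iff.2 fun γ hγ ↦ ?_⟩
  obtain ⟨k, hk⟩ := (h.functional_approx (a + 1) (γ / 5) (by positivity)).exists
  have hF : Tendsto (fun m ↦ F k (marginal (ρ k) (μs m))) U (𝓝 (F k (marginal (ρ k) μ))) :=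
    ((h.continuous k).tendsto _).comp (tendsto_pi_nhds.2 fun t ↦
      hlim _ (h.measurable_right k (measurableSet_singleton t)))
  obtain ⟨m, hFm, hδm⟩ := ((Metric.tendsto_nhds.1 hF (γ / 5) (by positivity)).and
    (hU (hδ_lim.eventually_lt_const (by positivity : 0 < γ / 10)))).exists
  refine ⟨w m, hw m, ?_⟩
  have hμ_near := hk μ hμ (hμkl.trans (ENNReal.ofReal_le_ofReal (by linarith)))
  have hμm_near := hk (μs m) (hμs m) (hkl1 m)
  have hw_near := hΦw m
  rw [Real.dist_eq, abs_lt] at hFm ⊢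
  rw [abs_le] at hμ_near hμm_near hw_near
  constructor <;> linarith

end HasFiniteTypeApprox

lemma coe_neg_le_inv_mul_log_iff {n : ℕ} (hn : 0 < n) {p : ℝ≥0∞} (hp : p ≠ ∞) {c : ℝ} :
    ((-c : ℝ) : EReal) ≤ (((n : ℝ)⁻¹ : ℝ) : EReal) * ENNReal.log p ↔
      exp (-(n * c)) ≤ p.toReal := by
  have hn' : (0 : ℝ) < n := by exact_mod_cast hn
  rcases eq_or_ne p 0 with rfl | hp0
  · simp [EReal.coe_mul_bot_of_pos (inv_pos.2 hn'), -EReal.coe_neg, exp_pos]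
  · have hpos := ENNReal.toReal_pos hp0 hp
    rw [ENNReal.log_pos_real hp0 hp, ← EReal.coe_mul, EReal.coe_le_coe_iff,
      ← Real.le_log_iff_exp_le hpos, inv_mul_eq_div, le_div_iff₀ hn', neg_mul, mul_comm c]

namespace HasFiniteTypeApprox

variable {P : ℕ → Measure S} [∀ n, IsZeroOrProbabilityMeasure (P n)] {ν : Measure α}
  [IsProbabilityMeasure ν] [∀ k, Finite (T k)] {σ : ∀ k, S → T k} {ρ : ∀ k, α → T k}
  {F : ∀ k, (T k → ℝ) → ℝ} {W : ∀ n, (Fin n → S) → ℝ} {Φ : Measure α → ℝ}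

lemma neg_klDiv_le_liminf (h : HasFiniteTypeApprox P ν σ ρ F W Φ) {A : Set ℝ} {μ : Measure α}
    [IsProbabilityMeasure μ] (hA : Φ μ ∈ interior A) :
    -(klDiv μ ν : EReal) ≤ liminf (fun n : ℕ ↦ (((n : ℝ)⁻¹ : ℝ) : EReal) *
      ENNReal.log ((Measure.pi fun _ : Fin n ↦ P n) {ω | W n ω ∈ A})) atTop := by
  rcases eq_or_ne (klDiv μ ν) ∞ with htop | hfin
  · simp [htop]
  rw [← ENNReal.ofReal_toReal hfin, EReal.coe_ennreal_ofReal, max_eq_left ENNReal.toReal_nonneg]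
  refine EReal.ge_of_forall_gt_iff_ge.1 fun r hr ↦ ?_
  rw [← EReal.coe_neg, EReal.coe_lt_coe_iff] at hr
  refine le_liminf_of_le (by isBoundedDefault) ?_
  filter_upwards [eventually_gt_atTop 0, h.eventually_exp_le ENNReal.toReal_nonneg
    (sub_pos.2 hr) (ENNReal.ofReal_toReal hfin).ge hA] with n hn hexp
  rw [← neg_neg r, coe_neg_le_inv_mul_log_iff hn (measure_ne_top _ _), ← measureReal_def]
  rwa [← add_sub_assoc, add_neg_cancel, zero_sub] at hexp

lemma iInf_contractedEntropy_le (h : HasFiniteTypeApprox P ν σ ρ F W Φ) {A : Set ℝ} {a : ℝ}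
    (hA : ∃ᶠ n : ℕ in atTop, exp (-(n * a)) ≤
      (Measure.pi fun _ : Fin n ↦ P n).real {ω | W n ω ∈ A}) :
    ⨅ x ∈ closure A, contractedEntropy ν Φ x ≤ a := by
  obtain ⟨n, hexp, hn⟩ := (hA.and_eventually (eventually_gt_atTop 0)).exists
  have hpi : (Measure.pi fun _ : Fin n ↦ P n).real {ω | W n ω ∈ A} ≤ 1 :=
    ENNReal.toReal_le_of_le_ofReal zero_le_one <| by
      calc _ ≤ (Measure.pi fun _ : Fin n ↦ P n) Set.univ := measure_mono (Set.subset_univ _)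
        _ ≤ ENNReal.ofReal 1 := by
          rw [Measure.pi_univ, ENNReal.ofReal_one]
          exact Finset.prod_le_one' fun _ _ ↦ prob_le_one
  have ha : 0 ≤ a := by
    have := exp_le_one_iff.1 (hexp.trans hpi)
    exact nonneg_of_mul_nonneg_right (by linarith) (by exact_mod_cast hn : (0 : ℝ) < n)
  obtain ⟨μ, hμ, hkl, hΦ⟩ := h.exists_klDiv_le_mem_closure hA
  calc ⨅ x ∈ closure A, contractedEntropy ν Φ x
    _ ≤ contractedEntropy ν Φ (Φ μ) := iInf₂_le _ hΦ
    _ ≤ klDiv μ ν := iInf₂_le μ ⟨hμ, rfl⟩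
    _ ≤ ENNReal.ofReal a := by exact_mod_cast hkl
    _ = a := by rw [EReal.coe_ennreal_ofReal, max_eq_left ha]

theorem ldp (h : HasFiniteTypeApprox P ν σ ρ F W Φ) (A : Set ℝ) :
    -(⨅ x ∈ interior A, contractedEntropy ν Φ x) ≤
        liminf (fun n : ℕ ↦ (((n : ℝ)⁻¹ : ℝ) : EReal) *
          ENNReal.log ((Measure.pi fun _ : Fin n ↦ P n) {ω | W n ω ∈ A})) atTop ∧
      limsup (fun n : ℕ ↦ (((n : ℝ)⁻¹ : ℝ) : EReal) *
          ENNReal.log ((Measure.pi fun _ : Fin n ↦ P n) {ω | W n ω ∈ A})) atTop ≤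
        -(⨅ x ∈ closure A, contractedEntropy ν Φ x) := by
  constructor
  · refine EReal.neg_le.2 (le_iInf₂ fun x hx ↦ le_iInf₂ ?_)
    rintro μ ⟨hμ, rfl⟩
    exact EReal.neg_le.2 (h.neg_klDiv_le_liminf hx)
  · refine EReal.ge_of_forall_gt_iff_ge.1 fun r hr ↦ EReal.le_neg.2 ?_
    have hfreq := (frequently_lt_of_lt_limsup (by isBoundedDefault) hr).and_eventually
      (eventually_gt_atTop 0)
    refine h.iInf_contractedEntropy_le (a := -r) (hfreq.mono fun n ⟨hlt, hn⟩ ↦ ?_)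
    exact (coe_neg_le_inv_mul_log_iff hn (measure_ne_top _ _)).1 (by rw [neg_neg]; exact hlt.le)

end HasFiniteTypeApprox

end FiniteTypeApproximation

section KernelForm

variable {ι X T : Type*} [Fintype ι] [MeasurableSpace X]

/-- The integral of a kernel `κ` of several variables in a finite type against a power of the
measure with weights `m`. -/
noncomputable def kernelForm [DecidableEq ι] [Fintype T] (κ : (ι → T) → ℝ) (m : T → ℝ) : ℝ :=
  ∑ s, κ s * ∏ t, m (s t)

lemma continuous_kernelForm [DecidableEq ι] [Fintype T] (κ : (ι → T) → ℝ) :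
    Continuous (kernelForm κ) := by
  unfold kernelForm; fun_prop

lemma integral_pi_comp_eq_kernelForm [DecidableEq ι] [Fintype T] [MeasurableSpace T]
    [MeasurableSingletonClass T] {f : X → T} (hf : Measurable f) (κ : (ι → T) → ℝ) (μ : Measure X)
    [IsFiniteMeasure μ] :
    ∫ y, κ (f ∘ y) ∂(Measure.pi fun _ : ι ↦ μ) = kernelForm κ (marginal f μ) := by
  have hcomp : Measurable fun y : ι → X ↦ f ∘ y := by fun_prop
  have hmarg (s : ι → T) : marginal (f ∘ ·) (Measure.pi fun _ ↦ μ) s = ∏ t, marginal f μ (s t) := by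
    rw [← Finset.sum_singleton (fun s ↦ ∏ t, marginal f μ (s t)) s, ← measureReal_pi_comp_mem hf]
    simp only [marginal, Finset.mem_singleton, Set.preimage, Set.mem_singleton_iff]
  rw [integral_comp_eq_sum_marginal hcomp]
  simp only [hmarg, kernelForm, mul_comm]

lemma integral_uniformOn_univ [Fintype X] [MeasurableSingletonClass X] (g : X → ℝ) :
    ∫ x, g x ∂(uniformOn Set.univ) = 1 / Fintype.card X * ∑ x, g x := by
  rw [integral_fintype .of_finite, Finset.mul_sum]
  refine Finset.sum_congr rfl fun x _ ↦ ?_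
  simp [measureReal_def, uniformOn_univ]

lemma measureReal_uniformOn_coe [MeasurableSingletonClass X] (s : Finset X) (p : X → Prop)
    [DecidablePred p] :
    (uniformOn (s : Set X)).real {x | p x} = (s.filter p).card / s.card := by
  classical
  have hp : (s : Set X) ∩ {x | p x} = (s.filter p : Finset X) := by ext; simp
  rw [measureReal_def, ← uniformOn_inter_self s.finite_toSet, hp, uniformOn_apply_finset,
    Finset.inter_eq_right.2 (Finset.filter_subset p s)]
  simp

lemma uniformOn_univ_prod [Finite X] [MeasurableSingletonClass X] :
    (uniformOn Set.univ : Measure X).prod (uniformOn Set.univ : Measure X) =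
      uniformOn Set.univ := by
  have := Fintype.ofFinite X
  rw [Measure.ext_iff_singleton]
  rintro ⟨a, b⟩
  rw [← Set.singleton_prod_singleton, Measure.prod_prod]
  simp [uniformOn_univ, ENNReal.mul_inv]

lemma map_pi_eval_pair {a b : ι} (hab : a ≠ b) (μ : Measure X) [IsProbabilityMeasure μ] :
    (Measure.pi fun _ : ι ↦ μ).map (fun y ↦ (y a, y b)) = μ.prod μ := by
  have hind := (iIndepFun_pi (μ := fun _ : ι ↦ μ) (X := fun _ x ↦ x)
    fun _ ↦ aemeasurable_id).indepFun hab
  rw [indepFun_iff_map_prod_eq_prod_map_map (measurable_pi_apply a).aemeasurable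
    (measurable_pi_apply b).aemeasurable] at hind
  simpa only [(measurePreserving_eval (fun _ : ι ↦ μ) _).map_eq] using hind

end KernelForm

section DisjointKernel

variable {ι X J : Type*}

open Classical in
/-- The kernel which is `0` if some condition `Q j` holds for all the points `y t`, and `1`
otherwise. It is the kernel `f` when `Q j` says that the binary digit `j` is `1`, and the
indicator of `gcd = 1` when `Q j` is divisibility by the `j`-th prime. -/
noncomputable def disjointKernel (Q : J → X → Prop) (y : ι → X) : ℝ :=
  if ∃ j, ∀ t, Q j (y t) then 0 else 1

open Classical in
/-- The truth values of the first `k` conditions at a point: the type of the point at level `k`. -/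
noncomputable def pattern (Q : ℕ → X → Prop) (k : ℕ) (x : X) : Fin k → Bool :=
  fun j ↦ decide (Q j x)

/-- The disjointness kernel on the patterns of level `k`. -/
noncomputable def patternKernel (k : ℕ) : (ι → Fin k → Bool) → ℝ :=
  disjointKernel fun j s ↦ s j = true

/-- The pairs of points sharing one of the conditions of index at least `k`. -/
def sharedFrom (Q : ℕ → X → Prop) (k : ℕ) : Set (X × X) :=
  {p | ∃ i, k ≤ i ∧ Q i p.1 ∧ Q i p.2}

lemma pattern_apply_eq_true {Q : ℕ → X → Prop} {k : ℕ} {x : X} {j : Fin k} :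
    pattern Q k x j = true ↔ Q j x := by
  simp only [pattern, decide_eq_true_eq]

lemma disjointKernel_congr {Y K : Type*} {Q : J → X → Prop} {R : K → Y → Prop} {y : ι → X}
    {z : ι → Y} (h : (∃ j, ∀ t, Q j (y t)) ↔ ∃ j, ∀ t, R j (z t)) :
    disjointKernel Q y = disjointKernel R z := by
  unfold disjointKernel; congr 1; exact propext h

lemma disjointKernel_nonneg (Q : J → X → Prop) (y : ι → X) : 0 ≤ disjointKernel Q y := by
  unfold disjointKernel; split_ifs <;> norm_num

lemma disjointKernel_le_one (Q : J → X → Prop) (y : ι → X) : disjointKernel Q y ≤ 1 := by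
  unfold disjointKernel; split_ifs <;> norm_num

lemma patternKernel_pattern (Q : ℕ → X → Prop) (k : ℕ) (y : ι → X) :
    patternKernel k (pattern Q k ∘ y) = disjointKernel (fun j : Fin k ↦ Q j) y :=
  disjointKernel_congr (by simp only [Function.comp_apply, pattern_apply_eq_true])

lemma abs_disjointKernel_sub_le (Q : ℕ → X → Prop) (k : ℕ) (a b : ι) (y : ι → X) :
    |disjointKernel Q y - patternKernel k (pattern Q k ∘ y)| ≤
      (sharedFrom Q k).indicator 1 (y a, y b) := by
  rw [patternKernel_pattern]
  by_cases hy : (y a, y b) ∈ sharedFrom Q k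
  · rw [Set.indicator_of_mem hy, Pi.one_apply, abs_le]
    have := disjointKernel_nonneg Q y
    have := disjointKernel_le_one Q y
    have := disjointKernel_nonneg (fun j : Fin k ↦ Q j) y
    have := disjointKernel_le_one (fun j : Fin k ↦ Q j) y
    constructor <;> linarith
  · have hiff : (∃ j, ∀ t, Q j (y t)) ↔ ∃ j : Fin k, ∀ t, Q j (y t) := by
      refine ⟨fun ⟨j, hj⟩ ↦ ⟨⟨j, ?_⟩, hj⟩, fun ⟨j, hj⟩ ↦ ⟨j, hj⟩⟩
      by_contra hjk
      exact hy ⟨j, not_lt.1 hjk, hj a, hj b⟩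
    rw [disjointKernel_congr hiff, sub_self, abs_zero, Set.indicator_of_notMem hy]

variable [MeasurableSpace X]

lemma measurable_pattern {Q : ℕ → X → Prop} (hQ : ∀ j, MeasurableSet {x | Q j x}) (k : ℕ) :
    Measurable (pattern Q k) :=
  measurable_pi_lambda _ fun j ↦ measurable_to_bool (by
    simpa only [Set.preimage, Set.mem_singleton_iff, pattern_apply_eq_true] using hQ j)

lemma measurable_disjointKernel [Countable J] [Countable ι] {Q : J → X → Prop}
    (hQ : ∀ j, MeasurableSet {x | Q j x}) :
    Measurable (disjointKernel Q : (ι → X) → ℝ) := by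
  refine Measurable.ite ?_ measurable_const measurable_const
  simp only [Set.ofPred_exists, Set.ofPred_forall]
  exact .iUnion fun j ↦ .iInter fun t ↦ measurable_pi_apply t (hQ j)

lemma measurableSet_sharedFrom {Q : ℕ → X → Prop} (hQ : ∀ j, MeasurableSet {x | Q j x}) (k : ℕ) :
    MeasurableSet (sharedFrom Q k) := by
  rw [sharedFrom, Set.ofPred_exists]
  exact .iUnion fun i ↦ (MeasurableSet.const _).inter
    ((measurable_fst (hQ i)).inter (measurable_snd (hQ i)))

lemma tendsto_prod_sharedFrom {Q : ℕ → X → Prop} {μ : Measure X} [IsFiniteMeasure μ]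
    (h : Summable fun i ↦ μ.real {x | Q i x} ^ 2) :
    Tendsto (fun k ↦ μ.prod μ (sharedFrom Q k)) atTop (𝓝 0) := by
  have hle (k : ℕ) : μ.prod μ (sharedFrom Q k) ≤
      ∑' i, ENNReal.ofReal (μ.real {x | Q (i + k) x} ^ 2) := by
    have hunion : sharedFrom Q k ⊆ ⋃ i, {x | Q (i + k) x} ×ˢ {x | Q (i + k) x} := by
      rintro p ⟨i, hi, hp⟩
      exact Set.mem_iUnion.2 ⟨i - k, by simpa [Nat.sub_add_cancel hi] using hp⟩
    refine (measure_mono hunion).trans ((measure_iUnion_le _).trans_eq (tsum_congr fun i ↦ ?_))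
    rw [Measure.prod_prod, ← pow_two, ENNReal.ofReal_pow measureReal_nonneg, ofReal_measureReal]
  exact tendsto_of_tendsto_of_tendsto_of_le_of_le tendsto_const_nhds
    (ENNReal.tendsto_sum_nat_add _ h.tsum_ofReal_ne_top) (fun _ ↦ zero_le) hle

variable [Fintype ι] [DecidableEq ι]

lemma abs_integral_disjointKernel_sub_kernelForm_le {Q : ℕ → X → Prop}
    (hQ : ∀ j, MeasurableSet {x | Q j x}) {a b : ι} (hab : a ≠ b) (k : ℕ) (μ : Measure X)
    [IsProbabilityMeasure μ] :
    |∫ y, disjointKernel Q y ∂(Measure.pi fun _ : ι ↦ μ) -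
      kernelForm (patternKernel (ι := ι) k) (marginal (pattern Q k) μ)| ≤
      (μ.prod μ).real (sharedFrom Q k) := by
  have hint {J : Type} [Countable J] {R : J → X → Prop} (hR : ∀ j, MeasurableSet {x | R j x}) :
      Integrable (disjointKernel R) (Measure.pi fun _ : ι ↦ μ) := by
    refine .of_bound (measurable_disjointKernel hR).aestronglyMeasurable 1 (ae_of_all _ fun y ↦ ?_)
    rw [norm_of_nonneg (disjointKernel_nonneg R y)]
    exact disjointKernel_le_one R y
  have hint_pattern : Integrable (fun y ↦ patternKernel k (pattern Q k ∘ y))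
      (Measure.pi fun _ : ι ↦ μ) := by
    simp only [patternKernel_pattern]
    exact hint fun j ↦ hQ j
  have hE := measurableSet_sharedFrom hQ k
  have hpair : Measurable fun y : ι → X ↦ (y a, y b) := by fun_prop
  rw [← integral_pi_comp_eq_kernelForm (measurable_pattern hQ k),
    ← integral_sub (hint hQ) hint_pattern]
  calc |∫ y, (disjointKernel Q y - patternKernel k (pattern Q k ∘ y)) ∂(Measure.pi fun _ : ι ↦ μ)|
    _ ≤ ∫ y, |disjointKernel Q y - patternKernel k (pattern Q k ∘ y)| ∂(Measure.pi fun _ : ι ↦ μ) :=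
      abs_integral_le_integral_abs
    _ ≤ ∫ y, (sharedFrom Q k).indicator 1 (y a, y b) ∂(Measure.pi fun _ : ι ↦ μ) :=
      integral_mono ((hint hQ).sub hint_pattern).abs
        ((integrable_const (1 : ℝ)).indicator (hpair hE)) (abs_disjointKernel_sub_le Q k a b)
    _ = (μ.prod μ).real (sharedFrom Q k) := by
      rw [← map_pi_eval_pair hab, ← integral_map hpair.aemeasurable
        (measurable_one.indicator hE).aestronglyMeasurable, integral_indicator_one hE]

end DisjointKernel

section EmpiricalKernel

variable {ι X : Type*} [Fintype ι] [DecidableEq ι]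

lemma marginal_pattern_uniformOn_univ (Q : ℕ → X → Prop) (k : ℕ) {n : ℕ} (ω : Fin n → X) :
    marginal (pattern (fun j i ↦ Q j (ω i)) k) (uniformOn Set.univ) =
      empirical (pattern Q k ∘ ω) := by
  classical
  ext s
  have := measureReal_uniformOn_coe (Finset.univ : Finset (Fin n))
    fun i ↦ pattern (fun j i ↦ Q j (ω i)) k i = s
  rw [Finset.coe_univ, Finset.card_univ, Fintype.card_fin] at this
  exact this

open Classical in
lemma abs_kernelForm_empirical_sub_sum_le (Q : ℕ → X → Prop) {a b : ι} (hab : a ≠ b) (k : ℕ)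
    {n : ℕ} [NeZero n] (ω : Fin n → X) :
    |kernelForm (patternKernel (ι := ι) k) (empirical (pattern Q k ∘ ω)) -
      1 / (n : ℝ) ^ Fintype.card ι * ∑ i : ι → Fin n, disjointKernel Q (ω ∘ i)| ≤
      (Finset.univ.filter fun i : Fin n × Fin n ↦ (ω i.1, ω i.2) ∈ sharedFrom Q k).card /
        (n : ℝ) ^ 2 := by
  have h := abs_integral_disjointKernel_sub_kernelForm_le (μ := uniformOn (Set.univ : Set (Fin n)))
    (Q := fun j i ↦ Q j (ω i)) (fun _ ↦ .of_discrete) hab k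
  have hpairs := measureReal_uniformOn_coe (Finset.univ : Finset (Fin n × Fin n))
    (· ∈ sharedFrom (fun j i ↦ Q j (ω i)) k)
  rw [Finset.coe_univ, Finset.card_univ, Fintype.card_prod, Fintype.card_fin] at hpairs
  rw [marginal_pattern_uniformOn_univ, ← uniformOn_pi, Set.pi_univ, integral_uniformOn_univ,
    Fintype.card_fun, Fintype.card_fin, uniformOn_univ_prod, abs_sub_comm] at h
  rw [Nat.cast_pow] at h
  rw [Nat.cast_mul, ← pow_two] at hpairs
  exact h.trans_eq hpairs

end EmpiricalKernel

section Antidiagonals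

variable {G : Type*} [Fintype G]

lemma card_filter_prod_le_two_mul_add [LinearOrder G] {h : G → G → Prop} [DecidableRel h]
    (hs : ∀ i j, h i j → h j i) :
    (Finset.univ.filter fun p : G × G ↦ h p.1 p.2).card ≤
      2 * (Finset.univ.filter fun p : G × G ↦ p.1 < p.2 ∧ h p.1 p.2).card + Fintype.card G := by
  set A := Finset.univ.filter fun p : G × G ↦ p.1 < p.2 ∧ h p.1 p.2 with hA
  have hcover : (Finset.univ.filter fun p : G × G ↦ h p.1 p.2) ⊆
      A ∪ A.image Prod.swap ∪ Finset.univ.image fun i : G ↦ (i, i) := by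
    rintro ⟨i, j⟩ hij
    rw [Finset.mem_filter_univ] at hij
    rcases lt_trichotomy i j with hlt | heq | hlt
    · simp [hA, hlt, hij]
    · simp [heq]
    · simp [hA, hlt, hs i j hij]
  calc _ ≤ _ := Finset.card_le_card hcover
    _ ≤ A.card + (A.image Prod.swap).card +
        ((Finset.univ : Finset G).image fun i : G ↦ ((i, i) : G × G)).card :=
      (Finset.card_union_le _ _).trans (Nat.add_le_add_right (Finset.card_union_le _ _) _)
    _ ≤ A.card + A.card + Fintype.card G :=
      add_le_add (Nat.add_le_add_left Finset.card_image_le _) Finset.card_image_le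
    _ = 2 * A.card + Fintype.card G := by ring

variable [AddCommGroup G]

lemma card_filter_prod_eq_sum_card_antidiagonal (h : G → G → Prop) [DecidableRel h] :
    (Finset.univ.filter fun p : G × G ↦ h p.1 p.2).card =
      ∑ s, (Finset.univ.filter fun i ↦ h i (s - i)).card := by
  simp only [Finset.card_filter, Fintype.sum_prod_type]
  rw [Finset.sum_comm (s := (Finset.univ : Finset G)) (f := fun s i ↦ if h i (s - i) then 1 else 0)]
  exact Finset.sum_congr rfl fun i _ ↦
    ((Equiv.subRight i).sum_comp fun j ↦ if h i j then 1 else 0).symm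

lemma exists_lt_two_mul_card_antidiagonal [LinearOrder G] {h : G → G → Prop} [DecidableRel h]
    (hs : ∀ i j, h i j → h j i) {δ : ℝ}
    (hδ : δ * Fintype.card G ^ 2 < (Finset.univ.filter fun p : G × G ↦ h p.1 p.2).card) :
    ∃ s, ∃ S : Finset G, δ * Fintype.card G - 1 < 2 * S.card ∧
      ∀ i ∈ S, s - i ∉ S ∧ h i (s - i) := by
  let S (s : G) : Finset G := Finset.univ.filter fun i ↦ i < s - i ∧ h i (s - i)
  suffices ∃ s, δ * Fintype.card G - 1 < 2 * (S s).card by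
    obtain ⟨s, hs⟩ := this
    refine ⟨s, S s, hs, fun i hi ↦ ?_⟩
    obtain ⟨hlt, hi⟩ := (Finset.mem_filter_univ i).1 hi
    refine ⟨fun hsi ↦ ?_, hi⟩
    have hgt := ((Finset.mem_filter_univ _).1 hsi).1
    rw [sub_sub_cancel] at hgt
    exact lt_asymm hlt hgt
  by_contra! hle
  have hpairs := card_filter_prod_le_two_mul_add hs
  rw [card_filter_prod_eq_sum_card_antidiagonal fun i j ↦ i < j ∧ h i j] at hpairs
  have hsum := Finset.sum_le_sum fun s (_ : s ∈ Finset.univ) ↦ hle s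
  rw [Finset.sum_const, Finset.card_univ, nsmul_eq_mul, ← Finset.mul_sum] at hsum
  have hcast : ((Finset.univ.filter fun p : G × G ↦ h p.1 p.2).card : ℝ) ≤
      2 * ∑ s, ((S s).card : ℝ) + Fintype.card G := by exact_mod_cast hpairs
  nlinarith

end Antidiagonals

section CommonDivisors

variable {ι : Type*} [Fintype ι] [DecidableEq ι] {D : Finset ℕ} {S : Finset ι}

/-- The assignments of an element of `D` to every point of `S`, extended by `1` outside `S`. -/
def divisorChoices (D : Finset ℕ) (S : Finset ι) : Finset (ι → ℕ) :=
  Fintype.piFinset fun i ↦ if i ∈ S then D else {1}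

lemma eq_one_of_mem_divisorChoices {p : ι → ℕ} (hp : p ∈ divisorChoices D S) {i : ι}
    (hi : i ∉ S) : p i = 1 := by
  simpa [hi] using Fintype.mem_piFinset.1 hp i

lemma ne_zero_of_mem_divisorChoices (hD : 0 ∉ D) {p : ι → ℕ} (hp : p ∈ divisorChoices D S)
    (i : ι) : p i ≠ 0 := by
  by_cases hi : i ∈ S
  · have hpi : p i ∈ D := by simpa [hi] using Fintype.mem_piFinset.1 hp i
    exact fun h ↦ hD (h ▸ hpi)
  · simp [eq_one_of_mem_divisorChoices hp hi]

lemma sum_divisorChoices_prod {f : ℕ → ℝ} (hf : f 1 = 1) :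
    ∑ p ∈ divisorChoices D S, ∏ i, f (p i) = (∑ r ∈ D, f r) ^ S.card := by
  rw [divisorChoices, ← Finset.prod_univ_sum _ fun _ r ↦ f r]
  simp only [apply_ite (fun E : Finset ℕ ↦ ∑ r ∈ E, f r), Finset.sum_singleton, hf,
    Finset.prod_ite_mem, Finset.univ_inter, Finset.prod_const]

lemma exists_mem_divisorChoices_forall_mul_dvd {g : Equiv.Perm ι} (hS : ∀ i ∈ S, g i ∉ S)
    {ω : ι → ℕ} (hω : ∀ i ∈ S, ∃ r ∈ D, r ∣ ω i ∧ r ∣ ω (g i)) :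
    ∃ p ∈ divisorChoices D S, ∀ i, p i * p (g.symm i) ∣ ω i := by
  have hex (i : ι) : ∃ r ∈ if i ∈ S then D else {1}, r ∣ ω i ∧ r ∣ ω (g i) := by
    split_ifs with hi
    · exact hω i hi
    · exact ⟨1, Finset.mem_singleton_self 1, one_dvd _, one_dvd _⟩
  choose p hpD hp hpg using hex
  have hmem : p ∈ divisorChoices D S := Fintype.mem_piFinset.2 hpD
  refine ⟨p, hmem, fun i ↦ ?_⟩
  by_cases hi : i ∈ S
  · have hi' : g.symm i ∉ S := fun h ↦ hS _ h (by rwa [g.apply_symm_apply])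
    rw [eq_one_of_mem_divisorChoices hmem hi', mul_one]
    exact hp i
  · rw [eq_one_of_mem_divisorChoices hmem hi, one_mul]
    simpa only [g.apply_symm_apply] using hpg (g.symm i)

variable {P : Measure ℕ} [IsFiniteMeasure P]

omit [DecidableEq ι] in
lemma measureReal_pi_forall_dvd_le (hP : ∀ r ≠ 0, P.real {x | r ∣ x} ≤ (r : ℝ)⁻¹) {r : ι → ℕ}
    (hr : ∀ i, r i ≠ 0) :
    (Measure.pi fun _ : ι ↦ P).real {ω | ∀ i, r i ∣ ω i} ≤ ∏ i, (r i : ℝ)⁻¹ := by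
  have hbox : {ω : ι → ℕ | ∀ i, r i ∣ ω i} = Set.univ.pi fun i ↦ {x | r i ∣ x} := by ext; simp
  rw [hbox, measureReal_def, Measure.pi_pi, ENNReal.toReal_prod]
  exact Finset.prod_le_prod (fun i _ ↦ measureReal_nonneg) fun i _ ↦ hP _ (hr i)

omit [DecidableEq ι] in
lemma measureReal_pi_forall_exists_dvd_le (hP : ∀ r ≠ 0, P.real {x | r ∣ x} ≤ (r : ℝ)⁻¹)
    (hD : 0 ∉ D) {g : Equiv.Perm ι} (hS : ∀ i ∈ S, g i ∉ S) :
    (Measure.pi fun _ : ι ↦ P).real {ω | ∀ i ∈ S, ∃ r ∈ D, r ∣ ω i ∧ r ∣ ω (g i)} ≤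
      (∑ r ∈ D, ((r : ℝ) ^ 2)⁻¹) ^ S.card := by
  classical
  have hcover : {ω : ι → ℕ | ∀ i ∈ S, ∃ r ∈ D, r ∣ ω i ∧ r ∣ ω (g i)} ⊆
      ⋃ p ∈ divisorChoices D S, {ω | ∀ i, p i * p (g.symm i) ∣ ω i} := fun ω hω ↦
    let ⟨p, hp, hdvd⟩ := exists_mem_divisorChoices_forall_mul_dvd hS hω
    Set.mem_biUnion hp hdvd
  calc _ ≤ _ := measureReal_mono hcover (measure_ne_top _ _)
    _ ≤ ∑ p ∈ divisorChoices D S,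
        (Measure.pi fun _ : ι ↦ P).real {ω | ∀ i, p i * p (g.symm i) ∣ ω i} :=
      measureReal_biUnion_finset_le _ _
    _ ≤ ∑ p ∈ divisorChoices D S, ∏ i, ((p i : ℝ) ^ 2)⁻¹ := by
      refine Finset.sum_le_sum fun p hp ↦ (measureReal_pi_forall_dvd_le hP fun i ↦ mul_ne_zero
        (ne_zero_of_mem_divisorChoices hD hp _) (ne_zero_of_mem_divisorChoices hD hp _)).trans_eq ?_
      simp only [Nat.cast_mul, mul_inv, Finset.prod_mul_distrib, sq,
        g.symm.prod_comp fun i ↦ (p i : ℝ)⁻¹]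
    _ = (∑ r ∈ D, ((r : ℝ) ^ 2)⁻¹) ^ S.card :=
      sum_divisorChoices_prod (f := fun r ↦ ((r : ℝ) ^ 2)⁻¹) (by simp)

/-- The divisibilities attached to overlapping pairs are not independent, but the pairs on one
antidiagonal `i + j = s` are disjoint, and some antidiagonal carries its share of the pairs. -/
lemma measureReal_pi_lt_card_exists_dvd_le {G : Type*} [Fintype G] [LinearOrder G] [AddCommGroup G]
    (hP : ∀ r ≠ 0, P.real {x | r ∣ x} ≤ (r : ℝ)⁻¹) (hD : 0 ∉ D) {c δ : ℝ} (hc : 0 ≤ c)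
    (hDc : ∑ r ∈ D, ((r : ℝ) ^ 2)⁻¹ ≤ exp (-c)) (hδ : 2 ≤ δ * Fintype.card G) :
    (Measure.pi fun _ : G ↦ P).real {ω | δ * Fintype.card G ^ 2 <
      (Finset.univ.filter fun p : G × G ↦ ∃ r ∈ D, r ∣ ω p.1 ∧ r ∣ ω p.2).card} ≤
      Fintype.card G * (2 ^ Fintype.card G * exp (-(c * (δ * Fintype.card G / 4)))) := by
  classical
  let large (s : G) : Finset (Finset G) := Finset.univ.filter fun S ↦
    δ * Fintype.card G ≤ 4 * S.card ∧ ∀ i ∈ S, s - i ∉ S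
  have hcover : {ω : G → ℕ | δ * Fintype.card G ^ 2 <
      (Finset.univ.filter fun p : G × G ↦ ∃ r ∈ D, r ∣ ω p.1 ∧ r ∣ ω p.2).card} ⊆
      ⋃ s, ⋃ S ∈ large s, {ω | ∀ i ∈ S, ∃ r ∈ D, r ∣ ω i ∧ r ∣ ω (s - i)} := by
    intro ω hω
    obtain ⟨s, S, hS, hmem⟩ := exists_lt_two_mul_card_antidiagonal
      (h := fun i j ↦ ∃ r ∈ D, r ∣ ω i ∧ r ∣ ω j) (fun i j ⟨r, hr, hi, hj⟩ ↦ ⟨r, hr, hj, hi⟩) hω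
    have hlarge : S ∈ large s :=
      (Finset.mem_filter_univ S).2 ⟨by linarith, fun i hi ↦ (hmem i hi).1⟩
    exact Set.mem_iUnion.2 ⟨s, Set.mem_biUnion hlarge fun i hi ↦ (hmem i hi).2⟩
  have hantidiagonal (s : G) (S : Finset G) (hS : S ∈ large s) :
      (Measure.pi fun _ : G ↦ P).real {ω | ∀ i ∈ S, ∃ r ∈ D, r ∣ ω i ∧ r ∣ ω (s - i)} ≤
        exp (-(c * (δ * Fintype.card G / 4))) := by
    obtain ⟨hcard, hS⟩ := (Finset.mem_filter_univ S).1 hS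
    refine (measureReal_pi_forall_exists_dvd_le (g := Equiv.subLeft s) hP hD hS).trans
      ((pow_le_pow_left₀ (by positivity) hDc _).trans ?_)
    rw [← exp_nat_mul, exp_le_exp]
    nlinarith
  refine (measureReal_mono hcover).trans ((measureReal_iUnion_fintype_le _).trans ?_)
  rw [← nsmul_eq_mul (Fintype.card G), ← Finset.card_univ (α := G)]
  refine Finset.sum_le_card_nsmul _ _ _ fun s _ ↦ (measureReal_biUnion_finset_le _ _).trans ?_
  refine (Finset.sum_le_card_nsmul _ _ _ (hantidiagonal s)).trans ?_
  rw [nsmul_eq_mul]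
  refine mul_le_mul_of_nonneg_right ?_ (exp_pos _).le
  exact_mod_cast (Finset.card_le_univ _).trans_eq Fintype.card_finset

lemma eventually_measureReal_pi_lt_card_exists_dvd_le {P : ℕ → Measure ℕ}
    [∀ n, IsFiniteMeasure (P n)] (hP : ∀ n, ∀ r ≠ 0, (P n).real {x | r ∣ x} ≤ (r : ℝ)⁻¹) (B : ℝ)
    {δ : ℝ} (hδ : 0 < δ) :
    ∀ᶠ k : ℕ in atTop, ∀ᶠ n : ℕ in atTop, (Measure.pi fun _ : Fin n ↦ P n).real
      {ω : Fin n → ℕ | δ * (n : ℝ) ^ 2 < (Finset.univ.filter fun p : Fin n × Fin n ↦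
        ∃ r ∈ Finset.Ioc k n, r ∣ ω p.1 ∧ r ∣ ω p.2).card} ≤ exp (-(n * B)) := by
  obtain ⟨c, hc, hcB⟩ : ∃ c : ℝ, 0 ≤ c ∧ 4 * (B + 1 + log 2) / δ ≤ c :=
    ⟨_, le_max_left _ _, le_max_right _ _⟩
  have hcδ : B + 1 ≤ c * (δ / 4) - log 2 := by
    rw [div_le_iff₀ hδ] at hcB
    linarith
  have hlim : Tendsto (fun k : ℕ ↦ 2 / ((k : ℝ) + 1)) atTop (𝓝 0) := by
    simpa [div_eq_mul_inv] using tendsto_one_div_add_atTop_nhds_zero_nat.const_mul (2 : ℝ)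
  filter_upwards [hlim.eventually_le_const (exp_pos (-c))] with k hk
  filter_upwards [eventually_gt_atTop 0, eventually_ge_atTop ⌈2 / δ⌉₊,
    eventually_mul_pow_mul_exp_le 1 1 (lt_add_one B)] with n hn hnδ hexp
  have : NeZero n := ⟨hn.ne'⟩
  have hD : ∑ r ∈ Finset.Ioc k n, ((r : ℝ) ^ 2)⁻¹ ≤ exp (-c) := by
    rw [← Finset.Ioo_add_one_right_eq_Ioc]
    exact (sum_Ioo_inv_sq_le k (n + 1)).trans hk
  have hn2 : 2 ≤ δ * n := by
    rw [mul_comm, ← div_le_iff₀ hδ]; exact Nat.ceil_le.1 hnδ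
  have h := measureReal_pi_lt_card_exists_dvd_le (G := Fin n) (hP n) (by simp) hc hD
    (by rwa [Fintype.card_fin])
  rw [Fintype.card_fin] at h
  calc _ ≤ _ := h
    _ = n * exp (-(n * (c * (δ / 4) - log 2))) := by
      rw [← exp_log (two_pos (α := ℝ)), ← exp_nat_mul, ← exp_add, log_exp]
      ring_nf
    _ ≤ 1 * ((n : ℝ) + 1) ^ 1 * exp (-(n * (B + 1))) := by gcongr; linarith
    _ ≤ exp (-(n * B)) := hexp

end CommonDivisors

section BernoulliWeights

variable {J : Type*} [Fintype J] {q : J → ℝ}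

/-- The probability that independent bits, equal to `true` with the probabilities `q j`, take the
values `t`. -/
noncomputable def bernoulliWeight (q : J → ℝ) (t : J → Bool) : ℝ :=
  ∏ j, if t j then q j else 1 - q j

lemma bernoulliWeight_pos (hq : ∀ j, q j ∈ Set.Ioo 0 1) (t : J → Bool) :
    0 < bernoulliWeight q t := by
  refine Finset.prod_pos fun j _ ↦ ?_
  split_ifs
  · exact (hq j).1
  · exact sub_pos.2 (hq j).2

lemma sum_bernoulliWeight_mul_ite [DecidableEq J] (q : J → ℝ) (j : J) :
    ∑ t, bernoulliWeight q t * (if t j then 1 else 0) = q j := by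
  let g (i : J) (c : Bool) : ℝ := if c then q i else if i = j then 0 else 1 - q i
  have hg (t : J → Bool) : bernoulliWeight q t * (if t j then 1 else 0) = ∏ i, g i (t i) := by
    cases htj : t j
    · rw [Finset.prod_eq_zero (Finset.mem_univ j) (by simp [g, htj])]
      simp
    · rw [if_pos rfl, mul_one]
      refine Finset.prod_congr rfl fun i _ ↦ ?_
      rcases eq_or_ne i j with rfl | hij
      · simp [g, htj]
      · simp [g, hij]
  simp only [hg, ← Fintype.piFinset_univ, ← Finset.prod_univ_sum, Fintype.sum_bool]
  rw [Finset.prod_eq_single j (fun i _ hij ↦ by simp [g, hij]) (by simp)]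
  simp [g]

lemma measureReal_eq_of_marginal_pattern {X : Type*} [MeasurableSpace X] {Q : ℕ → X → Prop}
    (hQ : ∀ j, MeasurableSet {x | Q j x}) {μ : Measure X} [IsFiniteMeasure μ] {q : ℕ → ℝ} {i : ℕ}
    (h : marginal (pattern Q (i + 1)) μ = bernoulliWeight fun j : Fin (i + 1) ↦ q j) :
    μ.real {x | Q i x} = q i := by
  classical
  have hind : (fun x ↦ if pattern Q (i + 1) x (Fin.last i) then (1 : ℝ) else 0) =
      {x | Q i x}.indicator 1 := by
    ext x; simp [pattern_apply_eq_true, Set.indicator_apply]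
  rw [← integral_indicator_one (hQ i), ← hind, integral_comp_eq_sum_marginal
    (measurable_pattern hQ (i + 1)) μ fun t ↦ if t (Fin.last i) then (1 : ℝ) else 0, h]
  exact sum_bernoulliWeight_mul_ite _ (Fin.last i)

end BernoulliWeights

section FunctionalApproximation

lemma eventually_abs_kernelForm_sub_integral_le {ι X : Type*} [Fintype ι] [DecidableEq ι]
    [MeasurableSpace X] {Q : ℕ → X → Prop} (hQ : ∀ j, MeasurableSet {x | Q j x}) {ν : Measure X}
    [IsProbabilityMeasure ν] (hsum : Summable fun i ↦ ν.real {x | Q i x} ^ 2) {a b : ι}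
    (hab : a ≠ b) (c : ℝ) {δ : ℝ} (hδ : 0 < δ) :
    ∀ᶠ k in atTop, ∀ μ : Measure X, IsProbabilityMeasure μ → klDiv μ ν ≤ ENNReal.ofReal c →
      |kernelForm (patternKernel (ι := ι) k) (marginal (pattern Q k) μ) -
        ∫ y, disjointKernel Q y ∂(Measure.pi fun _ : ι ↦ μ)| ≤ δ := by
  let entropyBall := {μ : Measure X // IsProbabilityMeasure μ ∧ klDiv μ ν ≤ ENNReal.ofReal c}
  have hprob (μ : entropyBall) : IsProbabilityMeasure μ.1 := μ.2.1
  have hkl (μ : entropyBall) : klDiv (μ.1.prod μ.1) (ν.prod ν) ≤ ENNReal.ofReal (2 * c) := by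
    refine klDiv_prod_le.trans ((add_le_add μ.2.2 μ.2.2).trans_eq ?_)
    rw [← two_mul, ENNReal.ofReal_mul zero_le_two, ENNReal.ofReal_ofNat]
  obtain ⟨η, hη, huac⟩ := uniformlyAbsolutelyContinuous_of_klDiv_le hkl _ (ENNReal.ofReal_pos.2 hδ)
  filter_upwards [(tendsto_prod_sharedFrom hsum).eventually_le_const hη] with k hk μ hμ hμkl
  rw [abs_sub_comm]
  refine (abs_integral_disjointKernel_sub_kernelForm_le hQ hab k μ).trans ?_
  exact ENNReal.toReal_le_of_le_ofReal hδ.le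
    (huac _ (measurableSet_sharedFrom hQ k) hk ⟨μ, hμ, hμkl⟩)

end FunctionalApproximation

section DivisorDensity

lemma tendsto_measureReal_dvd_and_forall_dvd_iff {J : Type*} {P : ℕ → Measure ℕ}
    [∀ n, IsFiniteMeasure (P n)]
    (hP : ∀ m ≠ 0, Tendsto (fun n ↦ (P n).real {x | m ∣ x}) atTop (𝓝 (m : ℝ)⁻¹)) {q : J → ℕ}
    (hq0 : ∀ j, q j ≠ 0) (hq : Pairwise fun i j ↦ (q i).Coprime (q j)) (b : J → Bool)
    (s : Finset J) {m : ℕ} (hm : m ≠ 0) (hmq : ∀ j ∈ s, m.Coprime (q j)) :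
    Tendsto (fun n ↦ (P n).real {x | m ∣ x ∧ ∀ j ∈ s, (q j ∣ x ↔ b j)}) atTop
      (𝓝 ((m : ℝ)⁻¹ * ∏ j ∈ s, if b j then (q j : ℝ)⁻¹ else 1 - (q j : ℝ)⁻¹)) := by
  classical
  induction s using Finset.induction_on generalizing m with
  | empty => simpa using hP m hm
  | insert j s hjs ih =>
    rw [Finset.forall_mem_insert] at hmq
    have hmul := ih (mul_ne_zero hm (hq0 j)) fun i hi ↦
      (hmq.2 i hi).mul_left (hq fun h ↦ hjs (h ▸ hi))
    have hdvd (x : ℕ) : m * q j ∣ x ↔ m ∣ x ∧ q j ∣ x :=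
      ⟨fun h ↦ ⟨dvd_of_mul_right_dvd h, dvd_of_mul_left_dvd h⟩,
        fun h ↦ hmq.1.mul_dvd_of_dvd_of_dvd h.1 h.2⟩
    rw [Finset.prod_insert hjs]
    cases hbj : b j
    · have hdiff (n : ℕ) : (P n).real {x | m ∣ x ∧ ∀ i ∈ insert j s, (q i ∣ x ↔ b i)} =
          (P n).real {x | m ∣ x ∧ ∀ i ∈ s, (q i ∣ x ↔ b i)} -
            (P n).real {x | m * q j ∣ x ∧ ∀ i ∈ s, (q i ∣ x ↔ b i)} := by
        have hsub : {x | m * q j ∣ x ∧ ∀ i ∈ s, (q i ∣ x ↔ b i)} ⊆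
            {x | m ∣ x ∧ ∀ i ∈ s, (q i ∣ x ↔ b i)} := fun x hx ↦ ⟨((hdvd x).1 hx.1).1, hx.2⟩
        rw [← measureReal_sdiff hsub .of_discrete]
        congr 1
        ext x
        simp only [Finset.forall_mem_insert, Set.mem_sdiff, Set.mem_ofPred_eq, hbj, hdvd]
        grind
      simp only [hdiff]
      convert (ih hm hmq.2).sub hmul using 2
      simp only [Nat.cast_mul, mul_inv, Bool.false_eq_true, if_false]
      ring
    · have hset : {x | m ∣ x ∧ ∀ i ∈ insert j s, (q i ∣ x ↔ b i)} =
          {x | m * q j ∣ x ∧ ∀ i ∈ s, (q i ∣ x ↔ b i)} := by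
        ext x
        simp [hbj, hdvd, and_assoc]
      rw [hset, if_pos rfl, ← mul_assoc, ← mul_inv, ← Nat.cast_mul]
      exact hmul

lemma tendsto_marginal_pattern_dvd {P : ℕ → Measure ℕ} [∀ n, IsFiniteMeasure (P n)]
    (hP : ∀ m ≠ 0, Tendsto (fun n ↦ (P n).real {x | m ∣ x}) atTop (𝓝 (m : ℝ)⁻¹)) {q : ℕ → ℕ}
    (hq0 : ∀ j, q j ≠ 0) (hq : Pairwise fun i j ↦ (q i).Coprime (q j)) (k : ℕ) (t : Fin k → Bool) :
    Tendsto (fun n ↦ marginal (pattern (fun j x ↦ q j ∣ x) k) (P n) t) atTop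
      (𝓝 (bernoulliWeight (fun j : Fin k ↦ (q j : ℝ)⁻¹) t)) := by
  have h := tendsto_measureReal_dvd_and_forall_dvd_iff hP (fun j : Fin k ↦ hq0 j)
    (hq.comp_of_injective Fin.val_injective) t Finset.univ one_ne_zero
    fun j _ ↦ Nat.coprime_one_left _
  have hset : pattern (fun j x ↦ q j ∣ x) k ⁻¹' {t} =
      {x | 1 ∣ x ∧ ∀ j ∈ Finset.univ, (q (j : Fin k) ∣ x ↔ t j)} := by
    ext x
    simp only [Set.mem_preimage, Set.mem_singleton_iff, funext_iff, Set.mem_ofPred_eq, one_dvd,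
      Finset.mem_univ, forall_const, true_and]
    exact forall_congr' fun j ↦ by rw [Bool.eq_iff_iff, pattern_apply_eq_true]
  simpa only [marginal, hset, bernoulliWeight, Nat.cast_one, inv_one, one_mul] using h

lemma measureReal_uniformOn_Icc_dvd (n m : ℕ) :
    (uniformOn (Set.Icc 1 n)).real {x | m ∣ x} = (n / m : ℕ) / n := by
  have h := measureReal_uniformOn_coe (Finset.Icc 1 n) (m ∣ ·)
  rw [Finset.coe_Icc, Nat.card_Icc, Nat.add_sub_cancel] at h
  rw [h, ← Nat.Ioc_filter_dvd_card_eq_div]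
  rfl

lemma measureReal_uniformOn_Icc_dvd_le (n m : ℕ) :
    (uniformOn (Set.Icc 1 n)).real {x | m ∣ x} ≤ (m : ℝ)⁻¹ := by
  rw [measureReal_uniformOn_Icc_dvd]
  refine div_le_of_le_mul₀ (by positivity) (by positivity) ?_
  rw [inv_mul_eq_div]
  exact Nat.cast_div_le

lemma tendsto_measureReal_uniformOn_Icc_dvd (m : ℕ) :
    Tendsto (fun n : ℕ ↦ (uniformOn (Set.Icc 1 n)).real {x | m ∣ x}) atTop (𝓝 (m : ℝ)⁻¹) := by
  have h := (tendsto_nat_floor_mul_div_atTop (inv_nonneg.2 (Nat.cast_nonneg (α := ℝ) m))).comp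
    tendsto_natCast_atTop_atTop
  refine h.congr fun n ↦ ?_
  rw [measureReal_uniformOn_Icc_dvd, Function.comp_apply, inv_mul_eq_div, Nat.floor_div_eq_div]

end DivisorDensity

section PrimesAndDigits

/-- Divisibility by the `j`-th prime, as a sequence of conditions on a natural number. -/
def primeDvd (j x : ℕ) : Prop := Nat.nth Nat.Prime j ∣ x

/-- The binary digit `j` is `1`, as a sequence of conditions on a real number. -/
def digitOne (j : ℕ) (a : ℝ) : Prop := digit j a = 1

/-- The cylinder probabilities of the law of `∑ B_i 2^{-i}` with independent Bernoulli`(1/p_i)`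
digits. -/
def HasPrimeDigitLaw (ν : Measure ℝ) : Prop :=
  ∀ (k : ℕ) (b : ℕ → Fin 2), ν {a | ∀ j < k, digit j a = (b j : ℕ)} =
    ∏ j ∈ Finset.range k, (if b j = 1 then ((Nat.nth Nat.Prime j : ℝ≥0∞))⁻¹
      else 1 - ((Nat.nth Nat.Prime j : ℝ≥0∞))⁻¹)

lemma inv_nth_prime_mem_Ioo (j : ℕ) : (Nat.nth Nat.Prime j : ℝ)⁻¹ ∈ Set.Ioo 0 1 :=
  have h : (1 : ℝ) < Nat.nth Nat.Prime j := by exact_mod_cast (Nat.prime_nth_prime j).one_lt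
  ⟨inv_pos.2 (zero_lt_one.trans h), inv_lt_one_of_one_lt₀ h⟩

lemma summable_inv_nth_prime_sq : Summable fun j ↦ (Nat.nth Nat.Prime j : ℝ)⁻¹ ^ 2 := by
  refine .of_nonneg_of_le (fun j ↦ by positivity) (fun j ↦ ?_)
    ((summable_nat_add_iff 2).2 (Real.summable_nat_pow_inv.2 one_lt_two))
  rw [← inv_pow]
  gcongr
  exact Nat.add_two_le_nth_prime j

lemma coprime_nth_prime : Pairwise fun i j ↦ (Nat.nth Nat.Prime i).Coprime (Nat.nth Nat.Prime j) :=
  fun i j hij ↦ (Nat.coprime_primes (Nat.prime_nth_prime i) (Nat.prime_nth_prime j)).2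
    ((Nat.nth_injective Nat.infinite_setOfPred_prime).ne hij)

lemma measurableSet_digitOne (j : ℕ) : MeasurableSet {a | digitOne j a} := by
  have hfloor : Measurable fun a : ℝ ↦ ⌊a * 2 ^ (j + 1)⌋ := by fun_prop
  exact (measurable_from_top (f := fun z : ℤ ↦ z.toNat % 2)).comp hfloor
    (measurableSet_singleton 1)

lemma HasPrimeDigitLaw.marginal_pattern {ν : Measure ℝ} (hν : HasPrimeDigitLaw ν) (k : ℕ) :
    marginal (pattern digitOne k) ν =
      bernoulliWeight fun j : Fin k ↦ (Nat.nth Nat.Prime j : ℝ)⁻¹ := by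
  ext t
  let b : ℕ → Fin 2 := Function.extend Fin.val (fun j : Fin k ↦ if t j then 1 else 0) 0
  have hb (j : Fin k) : b j = if t j then 1 else 0 := Fin.val_injective.extend_apply _ _ j
  have hbit (j : Fin k) (a : ℝ) : pattern digitOne k a j = t j ↔ digit j a = (b j : ℕ) := by
    have hdigit : digit j a < 2 := Nat.mod_lt _ two_pos
    rw [Bool.eq_iff_iff, pattern_apply_eq_true, digitOne, hb]
    cases t j <;> simp; omega
  have hset : pattern digitOne k ⁻¹' {t} = {a | ∀ j < k, digit j a = (b j : ℕ)} := by
    ext a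
    simp only [Set.mem_preimage, Set.mem_singleton_iff, funext_iff, hbit, Set.mem_ofPred_eq,
      Fin.forall_iff]
  rw [marginal, hset, measureReal_def, hν, ENNReal.toReal_prod, Finset.prod_range, bernoulliWeight]
  refine Finset.prod_congr rfl fun j _ ↦ ?_
  have hinv : (Nat.nth Nat.Prime j : ℝ≥0∞)⁻¹ ≤ 1 :=
    ENNReal.inv_le_one.2 (by exact_mod_cast (Nat.prime_nth_prime j).one_le)
  rw [hb]
  cases t j <;> simp [ENNReal.toReal_sub_of_le hinv ENNReal.one_ne_top]

lemma HasPrimeDigitLaw.summable_measureReal_sq {ν : Measure ℝ} [IsFiniteMeasure ν]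
    (hν : HasPrimeDigitLaw ν) : Summable fun j ↦ ν.real {a | digitOne j a} ^ 2 :=
  summable_inv_nth_prime_sq.congr fun j ↦ by
    rw [measureReal_eq_of_marginal_pattern (q := fun j ↦ (Nat.nth Nat.Prime j : ℝ)⁻¹)
      measurableSet_digitOne (hν.marginal_pattern (j + 1))]

lemma coprimeKernelD_eq_disjointKernel (d : ℕ) : coprimeKernelD d = disjointKernel digitOne := by
  classical
  ext y
  simp only [coprimeKernelD, disjointKernel, digitOne, Set.indicator_apply, Set.mem_ofPred_eq,
    ← not_exists, ite_not]
  congr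

lemma disjointKernel_primeDvd {ι : Type*} [Fintype ι] (y : ι → ℕ) :
    disjointKernel primeDvd y = if Finset.univ.gcd y = 1 then 1 else 0 := by
  have hprime : (∃ j, ∀ t, primeDvd j (y t)) ↔ Finset.univ.gcd y ≠ 1 := by
    simp only [primeDvd, Nat.ne_one_iff_exists_prime_dvd, Finset.dvd_gcd_iff, Finset.mem_univ,
      forall_const]
    exact ⟨fun ⟨j, hj⟩ ↦ ⟨_, Nat.prime_nth_prime j, hj⟩,
      fun ⟨p, hp, hdvd⟩ ↦ ⟨Nat.count Nat.Prime p, by rwa [Nat.nth_count hp]⟩⟩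
  simp only [disjointKernel, hprime, ne_eq, ite_not]

lemma exists_mem_Ioc_dvd_of_mem_sharedFrom {x y k n : ℕ} (hx : x ∈ Set.Icc 1 n)
    (h : (x, y) ∈ sharedFrom primeDvd k) : ∃ r ∈ Finset.Ioc k n, r ∣ x ∧ r ∣ y := by
  obtain ⟨i, hki, hix, hiy⟩ := h
  have hi := Nat.add_two_le_nth_prime i
  exact ⟨_, Finset.mem_Ioc.2 ⟨by omega, (Nat.le_of_dvd hx.1 hix).trans hx.2⟩, hix, hiy⟩

end PrimesAndDigits

section CoprimeTuples

variable {ι : Type*} [Fintype ι] [DecidableEq ι]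

lemma eventually_measureReal_pi_uniformOn_lt_abs_sub_le [Nontrivial ι] (B : ℝ) {δ : ℝ}
    (hδ : 0 < δ) :
    ∀ᶠ k in atTop, ∀ᶠ n : ℕ in atTop, (Measure.pi fun _ : Fin n ↦ uniformOn (Set.Icc 1 n)).real
      {ω | δ < |kernelForm (patternKernel (ι := ι) k) (empirical (pattern primeDvd k ∘ ω)) -
        1 / (n : ℝ) ^ Fintype.card ι * ∑ i : ι → Fin n, disjointKernel primeDvd (ω ∘ i)|} ≤
      exp (-(n * B)) := by
  classical
  obtain ⟨a, b, hab⟩ := exists_pair_ne ι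
  filter_upwards [eventually_measureReal_pi_lt_card_exists_dvd_le
    (fun n r _ ↦ measureReal_uniformOn_Icc_dvd_le n r) B hδ] with k hk
  filter_upwards [hk, eventually_gt_atTop 0] with n hn hn0
  have : NeZero n := ⟨hn0.ne'⟩
  have hmem : ∀ᵐ ω ∂(Measure.pi fun _ : Fin n ↦ uniformOn (Set.Icc 1 n)), ∀ i, ω i ∈ Set.Icc 1 n :=
    ae_all_iff.2 fun i ↦ Measure.tendsto_eval_ae_ae.eventually
      (ae_cond_mem (Set.finite_Icc 1 n).measurableSet)
  refine (ENNReal.toReal_mono (measure_ne_top _ _) (measure_mono_ae ?_)).trans hn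
  filter_upwards [hmem] with ω hω hlt
  have h := lt_of_lt_of_le hlt (abs_kernelForm_empirical_sub_sum_le primeDvd hab k ω)
  rw [lt_div_iff₀ (by positivity)] at h
  refine h.trans_le (Nat.cast_le.2 (Finset.card_le_card fun p hp ↦ ?_))
  exact Finset.mem_filter.2 ⟨Finset.mem_univ p,
    exists_mem_Ioc_dvd_of_mem_sharedFrom (hω p.1) (Finset.mem_filter.1 hp).2⟩

lemma HasPrimeDigitLaw.hasFiniteTypeApprox [Nontrivial ι] {ν : Measure ℝ} [IsProbabilityMeasure ν]
    (hν : HasPrimeDigitLaw ν) :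
    HasFiniteTypeApprox (fun n ↦ uniformOn (Set.Icc 1 n)) ν (pattern primeDvd) (pattern digitOne)
      (fun k ↦ kernelForm (patternKernel (ι := ι) k))
      (fun n ω ↦ 1 / (n : ℝ) ^ Fintype.card ι * ∑ i : ι → Fin n, disjointKernel primeDvd (ω ∘ i))
      (fun μ ↦ ∫ y, disjointKernel digitOne y ∂(Measure.pi fun _ : ι ↦ μ)) where
  measurable_left _ := .of_discrete
  measurable_right := measurable_pattern measurableSet_digitOne
  marginal_pos k t := by
    rw [hν.marginal_pattern]
    exact bernoulliWeight_pos (fun j : Fin k ↦ inv_nth_prime_mem_Ioo j) t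
  tendsto_marginal k t := by
    rw [hν.marginal_pattern]
    exact tendsto_marginal_pattern_dvd (fun m _ ↦ tendsto_measureReal_uniformOn_Icc_dvd m)
      (fun j ↦ (Nat.prime_nth_prime j).ne_zero) coprime_nth_prime k t
  continuous k := continuous_kernelForm _
  functional_approx c _ hδ :=
    have ⟨_, _, hab⟩ := exists_pair_ne ι
    eventually_abs_kernelForm_sub_integral_le measurableSet_digitOne hν.summable_measureReal_sq
      hab c hδ
  statistic_approx B _ hδ := eventually_measureReal_pi_uniformOn_lt_abs_sub_le B hδ

lemma coprimeRateD_eq_contractedEntropy (d : ℕ) {ν : Measure ℝ} [IsProbabilityMeasure ν]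
    (hsupp : ν (Set.Icc 0 1) = 1) (x : ℝ) :
    coprimeRateD d ν x = contractedEntropy ν
      (fun μ ↦ ∫ y, coprimeKernelD d y ∂(Measure.pi fun _ : Fin d ↦ μ)) x := by
  refine le_antisymm (le_iInf₂ fun μ ⟨hμ, hx⟩ ↦ ?_) (le_iInf₂ fun μ ⟨hμ, _, hx⟩ ↦ ?_)
  · by_cases hac : μ ≪ ν
    · have hμsupp : μ (Set.Icc 0 1) = 1 := by
        rw [← mem_ae_iff_prob_eq_one measurableSet_Icc] at hsupp ⊢
        exact hac.ae_le hsupp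
      exact iInf₂_le_of_le μ ⟨hμ, hμsupp, hx⟩ relEntropy_eq_klDiv.le
    · rw [klDiv_of_not_ac hac]
      exact le_top
  · exact iInf₂_le_of_le μ ⟨hμ, hx⟩ relEntropy_eq_klDiv.ge

theorem ldp_coprime_tuples_general (d : ℕ) (hd : 2 ≤ d) (ν : Measure ℝ) [IsProbabilityMeasure ν]
    (hsupp : ν (Set.Icc 0 1) = 1) (hν : HasPrimeDigitLaw ν) (A : Set ℝ) :
    -(⨅ x ∈ interior A, coprimeRateD d ν x) ≤
        liminf (fun n : ℕ ↦ (((n : ℝ)⁻¹ : ℝ) : EReal) * ENNReal.log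
          ((unifVec n) {ω | (1 / (n : ℝ) ^ d) * (∑ i : Fin d → Fin n,
            if Finset.univ.gcd (fun t : Fin d ↦ ω (i t)) = 1 then (1 : ℝ) else 0) ∈ A})) atTop ∧
      limsup (fun n : ℕ ↦ (((n : ℝ)⁻¹ : ℝ) : EReal) * ENNReal.log
          ((unifVec n) {ω | (1 / (n : ℝ) ^ d) * (∑ i : Fin d → Fin n,
            if Finset.univ.gcd (fun t : Fin d ↦ ω (i t)) = 1 then (1 : ℝ) else 0) ∈ A})) atTop ≤
        -(⨅ x ∈ closure A, coprimeRateD d ν x) := by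
  have : Nontrivial (Fin d) := Fin.nontrivial_iff_two_le.2 hd
  have hldp := (HasPrimeDigitLaw.hasFiniteTypeApprox (ι := Fin d) hν).ldp A
  simp only [disjointKernel_primeDvd, Fintype.card_fin, ← coprimeKernelD_eq_disjointKernel,
    ← coprimeRateD_eq_contractedEntropy d hsupp] at hldp
  exact hldp

end CoprimeTuples

/-- For `d ≥ 2`, the empirical densities
`W_n = n^{-d} ∑_{1≤i₁,…,i_d≤n} 1_{gcd(X_{i₁},…,X_{i_d})=1}` satisfy a large
deviation principle with speed `n` and rate function `coprimeRateD d ν`, where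
`ν` is the law on `[0,1]` of `∑_i B_i 2^{-i}` with independent Bernoulli`(1/p_i)`
digits `B_i` (`p_i` the `i`-th prime), pinned down by its cylinder
probabilities: for every Borel `A ⊆ [0,1]`,
`−inf_{x∈A°} I(x) ≤ liminf_n (1/n) log P(W_n ∈ A)` and
`limsup_n (1/n) log P(W_n ∈ A) ≤ −inf_{x∈closure A} I(x)`
(with `(1/n) log P = −∞` when the probability vanishes). -/
theorem ldp_coprime_tuples (d : ℕ) (hd : 2 ≤ d)
    (ν : Measure ℝ) (hprob : IsProbabilityMeasure ν)
    (hsupp : ν (Set.Icc 0 1) = 1)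
    (hν : ∀ (k : ℕ) (b : ℕ → Fin 2),
      ν {a | ∀ j < k, digit j a = (b j : ℕ)} =
        ∏ j ∈ Finset.range k,
          (if b j = 1 then ((Nat.nth Nat.Prime j : ℝ≥0∞))⁻¹
            else 1 - ((Nat.nth Nat.Prime j : ℝ≥0∞))⁻¹))
    (A : Set ℝ) (hA : MeasurableSet A) (hA1 : A ⊆ Set.Icc 0 1) :
    -(⨅ x ∈ interior A, coprimeRateD d ν x) ≤
        Filter.liminf
          (fun n : ℕ =>
            (((n : ℝ)⁻¹ : ℝ) : EReal) *
              ENNReal.log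
                ((unifVec n) {ω | (1 / (n : ℝ) ^ d) *
                  (∑ i : Fin d → Fin n,
                    if Finset.univ.gcd (fun t : Fin d => ω (i t)) = 1
                    then (1 : ℝ) else 0) ∈ A}))
          atTop ∧
      Filter.limsup
          (fun n : ℕ =>
            (((n : ℝ)⁻¹ : ℝ) : EReal) *
              ENNReal.log
                ((unifVec n) {ω | (1 / (n : ℝ) ^ d) *
                  (∑ i : Fin d → Fin n,
                    if Finset.univ.gcd (fun t : Fin d => ω (i t)) = 1
                    then (1 : ℝ) else 0) ∈ A}))
          atTop
        ≤ -(⨅ x ∈ closure A, coprimeRateD d ν x) :=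
  ldp_coprime_tuples_general d hd ν hsupp hν A
end

section
/- For every ε > 0 there exists K such that for all sufficiently large k₁, k₂ with K ≤ k₁ < k₂, and all sufficiently large n: (1/n)·log P( ∑_{p ∈ S(k₁,k₂)} Y_p² > εn² ) ≤ 4·log log k₂ + 4 − (ε/8)·log k₁. -/
open MeasureTheory ProbabilityTheory Filter Real

/-- `S(k₁,k₂)`: the finite set of primes `p` with `k₁ < p ≤ k₂`. -/
def primesIn (k₁ k₂ : ℕ) : Finset ℕ := (Finset.Ioc k₁ k₂).filter Nat.Prime

/-- `Y_p = #{1 ≤ i ≤ n : p ∣ X_i}`. -/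
def Yp (n : ℕ) (p : ℕ) (ω : Fin n → ℕ) : ℕ :=
  (Finset.univ.filter fun i : Fin n => p ∣ ω i).card

/-!
Call `d` heavy if `Y_d ≥ n d^(-3/4)`. The light `d > k` contribute at most `n² ∑_{d > k} d^(-3/2)`
to `∑ Y_d²`, so if that sum exceeds `ε n²` then, as `Y_d ≤ n`, the heavy `Y_d` add up to almost
`ε n`. For a fixed set `t` of pairwise coprime moduli, the exponential moment of
`∑_{d ∈ t} (log d / 4) Y_d` is at most `exp (n ∑_{d ∈ t} d^(-3/4))`; when all of `t` is heavy, this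
correction is at most `∑_{d ∈ t} Y_d`, which is small against the weighted sum. The union bound
over the `2 ^ #s` possible heavy sets `t ⊆ s` costs at most `log 2` per variable once `n ≥ #s`.
-/

open scoped ENNReal

lemma prod_id_dvd_iff_of_pairwise_coprime {s : Finset ℕ} (hs : (s : Set ℕ).Pairwise Nat.Coprime)
    {x : ℕ} : ∏ d ∈ s, d ∣ x ↔ ∀ d ∈ s, d ∣ x :=
  ⟨fun h _ hd => (Finset.dvd_prod_of_mem id hd).trans h,
    s.prod_dvd_of_isRelPrime (hs.imp fun _ _ => Nat.coprime_iff_isRelPrime.1)⟩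

lemma uniformOn_Icc_setOf_dvd_le (n d : ℕ) :
    uniformOn (Set.Icc 1 n) {x | d ∣ x} ≤ (d : ℝ≥0∞)⁻¹ := by
  have hcoe : Set.Icc 1 n = (Finset.Ioc 0 n : Set ℕ) := by ext; simp [Nat.succ_le_iff]
  have hinter : Set.Icc 1 n ∩ {x | d ∣ x} = ({x ∈ Finset.Ioc 0 n | d ∣ x} : Finset ℕ) := by
    ext; simp [Nat.succ_le_iff]
  rw [← uniformOn_inter_self (Set.finite_Icc 1 n), hinter, hcoe, uniformOn_apply_finset,
    Finset.inter_eq_right.2 (Finset.filter_subset _ _), Nat.Ioc_filter_dvd_card_eq_div,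
    Nat.card_Ioc, Nat.sub_zero]
  rw [ENNReal.le_inv_iff_mul_le, ← ENNReal.mul_div_right_comm]
  refine ENNReal.div_le_of_le_mul ?_
  rw [one_mul]
  exact_mod_cast Nat.div_mul_le_self n d

lemma lintegral_prod_one_add_ite_dvd_le (n : ℕ) {s : Finset ℕ}
    (hs : (s : Set ℕ).Pairwise Nat.Coprime) (c : ℕ → ℝ≥0∞) :
    ∫⁻ x, ∏ d ∈ s, (1 + if d ∣ x then c d else 0) ∂uniformOn (Set.Icc 1 n)
      ≤ ∏ d ∈ s, (1 + c d / d) := by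
  have hmoment (t : Finset ℕ) (ht : t ⊆ s) :
      ∫⁻ x, ∏ d ∈ t, (if d ∣ x then c d else 0) ∂uniformOn (Set.Icc 1 n) ≤ ∏ d ∈ t, c d / d := by
    calc
      _ = ∫⁻ x, {x | ∏ d ∈ t, d ∣ x}.indicator (fun _ => ∏ d ∈ t, c d) x
            ∂uniformOn (Set.Icc 1 n) := by
        simp only [Finset.prod_ite_zero, ← prod_id_dvd_iff_of_pairwise_coprime (hs.mono ht),
          Set.indicator_apply, Set.mem_ofPred_eq]
      _ = (∏ d ∈ t, c d) * uniformOn (Set.Icc 1 n) {x | ∏ d ∈ t, d ∣ x} :=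
        lintegral_indicator_const .of_discrete _
      _ ≤ (∏ d ∈ t, c d) * ((∏ d ∈ t, d : ℕ) : ℝ≥0∞)⁻¹ := by
        gcongr
        exact uniformOn_Icc_setOf_dvd_le n _
      _ = ∏ d ∈ t, c d / d := by
        rw [Nat.cast_prod, ← div_eq_mul_inv,
          ENNReal.prod_div_distrib fun _ _ _ _ _ => .inr (ENNReal.natCast_ne_top _)]
  simp_rw [Finset.prod_one_add]
  rw [lintegral_finsetSum _ fun _ _ => Measurable.of_discrete]
  exact Finset.sum_le_sum fun t ht => hmoment t (Finset.mem_powerset.1 ht)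

lemma lintegral_pi_prod {ι : Type*} [Fintype ι] {α : ι → Type*} [∀ i, MeasurableSpace (α i)]
    (μ : ∀ i, Measure (α i)) [∀ i, IsProbabilityMeasure (μ i)] {g : ∀ i, α i → ℝ≥0∞}
    (hg : ∀ i, Measurable (g i)) :
    ∫⁻ ω, ∏ i, g i (ω i) ∂Measure.pi μ = ∏ i, ∫⁻ x, g i x ∂μ i := by
  have hindep : iIndepFun (fun i (ω : ∀ i, α i) => g i (ω i)) (Measure.pi μ) :=
    iIndepFun_pi fun i => (hg i).aemeasurable
  rw [lintegral_prod_eq_prod_lintegral_of_indepFun Finset.univ _ hindep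
    fun i => (hg i).comp (measurable_pi_apply i)]
  exact Finset.prod_congr rfl fun i _ => (measurePreserving_eval μ i).lintegral_comp (hg i)

lemma Yp_le (n d : ℕ) (ω : Fin n → ℕ) : Yp n d ω ≤ n :=
  (Finset.card_le_univ _).trans_eq (Fintype.card_fin n)

lemma prod_one_add_pow_Yp (n : ℕ) (s : Finset ℕ) (c : ℕ → ℝ≥0∞) (ω : Fin n → ℕ) :
    ∏ d ∈ s, (1 + c d) ^ Yp n d ω = ∏ i, ∏ d ∈ s, (1 + if d ∣ ω i then c d else 0) := by
  rw [Finset.prod_comm]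
  refine Finset.prod_congr rfl fun d _ => ?_
  simp only [add_ite, add_zero, Finset.prod_ite, Finset.prod_const_one, mul_one,
    Finset.prod_const, Yp]

lemma lintegral_prod_one_add_pow_Yp_le {n : ℕ} (hn : n ≠ 0) {s : Finset ℕ}
    (hs : (s : Set ℕ).Pairwise Nat.Coprime) (c : ℕ → ℝ≥0∞) :
    ∫⁻ ω, ∏ d ∈ s, (1 + c d) ^ Yp n d ω ∂unifVec n ≤ (∏ d ∈ s, (1 + c d / d)) ^ n := by
  have : IsProbabilityMeasure (uniformOn (Set.Icc 1 n)) :=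
    isProbabilityMeasure_uniformOn (Set.finite_Icc 1 n)
      (Set.nonempty_Icc.2 (Nat.one_le_iff_ne_zero.2 hn))
  simp_rw [prod_one_add_pow_Yp, unifVec]
  rw [lintegral_pi_prod (g := fun _ x => ∏ d ∈ s, (1 + if d ∣ x then c d else 0)) _
    fun _ => Measurable.of_discrete, Finset.prod_const, Finset.card_univ,
    Fintype.card_fin]
  gcongr
  exact lintegral_prod_one_add_ite_dvd_le n hs c

lemma lintegral_exp_sum_Yp_mul_le {n : ℕ} (hn : n ≠ 0) {s : Finset ℕ}
    (hs : (s : Set ℕ).Pairwise Nat.Coprime) (hpos : ∀ d ∈ s, 0 < d) (a : ℕ → ℝ) :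
    ∫⁻ ω, .ofReal (exp (∑ d ∈ s, Yp n d ω * a d)) ∂unifVec n
      ≤ .ofReal (exp (n * ∑ d ∈ s, exp (a d) / d)) := by
  set c : ℕ → ℝ≥0∞ := fun d => .ofReal (exp (a d)) with hc
  have hexp (f : ℕ → ℝ) : ENNReal.ofReal (exp (∑ d ∈ s, f d)) = ∏ d ∈ s, .ofReal (exp (f d)) := by
    rw [exp_sum, ENNReal.ofReal_prod_of_nonneg fun _ _ => (exp_pos _).le]
  have hfactor (d : ℕ) (hd : 0 < d) : 1 + c d / d ≤ .ofReal (exp (exp (a d) / d)) := by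
    rw [hc, ← ENNReal.ofReal_natCast, ← ENNReal.ofReal_div_of_pos (mod_cast hd),
      ← ENNReal.ofReal_one, ← ENNReal.ofReal_add zero_le_one (by positivity), add_comm]
    exact ENNReal.ofReal_le_ofReal (add_one_le_exp _)
  calc
    _ ≤ ∫⁻ ω, ∏ d ∈ s, (1 + c d) ^ Yp n d ω ∂unifVec n := by
      refine lintegral_mono fun ω => ?_
      rw [hexp]
      gcongr with d
      rw [exp_nat_mul, ENNReal.ofReal_pow (exp_pos _).le]
      gcongr
      exact le_add_self
    _ ≤ (∏ d ∈ s, (1 + c d / d)) ^ n := lintegral_prod_one_add_pow_Yp_le hn hs c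
    _ ≤ .ofReal (exp (n * ∑ d ∈ s, exp (a d) / d)) := by
      rw [exp_nat_mul, ENNReal.ofReal_pow (exp_pos _).le, hexp]
      gcongr with d hd
      exact hfactor d (hpos d hd)

lemma unifVec_setOf_add_le_sum_Yp_mul_le {n : ℕ} (hn : n ≠ 0) {s : Finset ℕ}
    (hs : (s : Set ℕ).Pairwise Nat.Coprime) (hpos : ∀ d ∈ s, 0 < d) (a : ℕ → ℝ) (r : ℝ) :
    unifVec n {ω | r + n * ∑ d ∈ s, exp (a d) / d ≤ ∑ d ∈ s, Yp n d ω * a d}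
      ≤ .ofReal (exp (-r)) := by
  set m : ℝ := n * ∑ d ∈ s, exp (a d) / d
  calc
    _ ≤ unifVec n {ω | .ofReal (exp (r + m)) ≤ ENNReal.ofReal (exp (∑ d ∈ s, Yp n d ω * a d))} :=
      measure_mono fun ω hω => ENNReal.ofReal_le_ofReal (exp_le_exp.2 hω)
    _ ≤ (∫⁻ ω, .ofReal (exp (∑ d ∈ s, Yp n d ω * a d)) ∂unifVec n) / .ofReal (exp (r + m)) :=
      meas_ge_le_lintegral_div Measurable.of_discrete.aemeasurable (by simp [exp_pos]) (by simp)
    _ ≤ .ofReal (exp m) / .ofReal (exp (r + m)) := by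
      gcongr
      exact lintegral_exp_sum_Yp_mul_le hn hs hpos a
    _ = .ofReal (exp (-r)) := by
      rw [← ENNReal.ofReal_div_of_pos (exp_pos _), ← exp_sub]
      ring_nf

section Heavy

variable {ι : Type*} {s : Finset ι} {y τ : ι → ℝ} {N ε δ : ℝ}

lemma mul_le_sum_filter_of_lt_sum_sq (hN : 0 < N) (hy₀ : ∀ i ∈ s, 0 ≤ y i)
    (hyN : ∀ i ∈ s, y i ≤ N) (hτ : ∑ i ∈ s, τ i ^ 2 ≤ δ) (hy : ε * N ^ 2 < ∑ i ∈ s, y i ^ 2) :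
    (ε - δ) * N ≤ ∑ i ∈ s with N * τ i ≤ y i, y i := by
  have hsq :
      ∑ i ∈ s, y i ^ 2 ≤ N * ∑ i ∈ s with N * τ i ≤ y i, y i + N ^ 2 * ∑ i ∈ s, τ i ^ 2 := by
    rw [Finset.sum_filter, Finset.mul_sum, Finset.mul_sum, ← Finset.sum_add_distrib]
    refine Finset.sum_le_sum fun i hi => ?_
    split_ifs with h
    · nlinarith [hy₀ i hi, hyN i hi, sq_nonneg (N * τ i)]
    · nlinarith [hy₀ i hi]
  refine le_of_mul_le_mul_left ?_ hN
  nlinarith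

lemma exists_subset_le_sum_mul_of_lt_sum_sq (hN : 0 < N) (hy₀ : ∀ i ∈ s, 0 ≤ y i)
    (hyN : ∀ i ∈ s, y i ≤ N) (hτ : ∑ i ∈ s, τ i ^ 2 ≤ δ) (hy : ε * N ^ 2 < ∑ i ∈ s, y i ^ 2)
    {a : ι → ℝ} {A : ℝ} (hA : 1 ≤ A) (ha : ∀ i ∈ s, A ≤ a i) :
    ∃ t ⊆ s, N * ((A - 1) * (ε - δ)) + N * ∑ i ∈ t, τ i ≤ ∑ i ∈ t, y i * a i := by
  set t : Finset ι := {i ∈ s | N * τ i ≤ y i}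
  have hts : t ⊆ s := Finset.filter_subset _ _
  have hheavy : (ε - δ) * N ≤ ∑ i ∈ t, y i := mul_le_sum_filter_of_lt_sum_sq hN hy₀ hyN hτ hy
  refine ⟨t, hts, ?_⟩
  calc
    _ = (A - 1) * ((ε - δ) * N) + ∑ i ∈ t, N * τ i := by
      rw [Finset.mul_sum]
      ring
    _ ≤ (A - 1) * ∑ i ∈ t, y i + ∑ i ∈ t, y i := by
      gcongr with i hi
      exact (Finset.mem_filter.1 hi).2
    _ = ∑ i ∈ t, y i * A := by
      rw [← Finset.sum_mul]
      ring
    _ ≤ ∑ i ∈ t, y i * a i := by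
      gcongr with i hi
      · exact hy₀ i (hts hi)
      · exact ha i (hts hi)

end Heavy

lemma unifVec_setOf_lt_sum_Yp_sq_le {n : ℕ} (hn : n ≠ 0) {s : Finset ℕ}
    (hs : (s : Set ℕ).Pairwise Nat.Coprime) (hpos : ∀ d ∈ s, 0 < d) {a : ℕ → ℝ} {A ε δ : ℝ}
    (hA : 1 ≤ A) (ha : ∀ d ∈ s, A ≤ a d) (hδ : ∑ d ∈ s, (exp (a d) / d) ^ 2 ≤ δ) :
    unifVec n {ω | ε * (n : ℝ) ^ 2 < ∑ d ∈ s, (Yp n d ω : ℝ) ^ 2}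
      ≤ 2 ^ s.card * .ofReal (exp (-(n * ((A - 1) * (ε - δ))))) := by
  set r : ℝ := n * ((A - 1) * (ε - δ))
  calc
    _ ≤ unifVec n (⋃ t ∈ s.powerset,
          {ω | r + n * ∑ d ∈ t, exp (a d) / d ≤ ∑ d ∈ t, Yp n d ω * a d}) := by
      refine measure_mono fun ω hω => ?_
      obtain ⟨t, hts, ht⟩ := exists_subset_le_sum_mul_of_lt_sum_sq (by positivity)
        (fun d _ => Nat.cast_nonneg _) (fun d _ => Nat.cast_le.2 (Yp_le n d ω)) hδ hω hA ha
      exact Set.mem_biUnion (Finset.mem_powerset.2 hts) ht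
    _ ≤ ∑ t ∈ s.powerset,
          unifVec n {ω | r + n * ∑ d ∈ t, exp (a d) / d ≤ ∑ d ∈ t, Yp n d ω * a d} :=
      measure_biUnion_finset_le _ _
    _ ≤ ∑ _t ∈ s.powerset, .ofReal (exp (-r)) := by
      gcongr with t ht
      rw [Finset.mem_powerset] at ht
      exact unifVec_setOf_add_le_sum_Yp_mul_le hn (hs.mono ht) (fun d hd => hpos d (ht hd)) a r
    _ = 2 ^ s.card * .ofReal (exp (-r)) := by
      rw [Finset.sum_const, Finset.card_powerset, nsmul_eq_mul, Nat.cast_pow, Nat.cast_ofNat]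

lemma exp_log_div_four_div_sq {x : ℝ} (hx : 0 < x) :
    (exp (log x / 4) / x) ^ 2 = x ^ (-(3 / 2) : ℝ) := by
  rw [rpow_def_of_pos hx, div_pow, ← exp_nat_mul, div_eq_iff (by positivity)]
  nth_rw 3 [← exp_log hx]
  rw [← exp_nat_mul, ← exp_add]
  push_cast
  ring_nf

lemma exists_nat_forall_sum_le_of_summable {f : ℕ → ℝ} (hf : Summable f) {δ : ℝ} (hδ : 0 < δ) :
    ∃ K : ℕ, ∀ s : Finset ℕ, (∀ d ∈ s, K ≤ d) → ∑ d ∈ s, f d ≤ δ := by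
  obtain ⟨K, hK⟩ := hf.nat_tsum_vanishing (Iio_mem_nhds hδ)
  refine ⟨K, fun s hs => ?_⟩
  have := hK s hs
  rw [Finset.tsum_subtype'] at this
  exact this.le

lemma inv_mul_log_le_of_le_ofReal_exp {x r : ℝ} (hx : 0 < x) {p : ℝ≥0∞}
    (hp : p ≤ .ofReal (exp (x * r))) : ((x⁻¹ : ℝ) : EReal) * ENNReal.log p ≤ r := by
  have hlog := ENNReal.log_le_log hp
  rw [ENNReal.log_ofReal_of_pos (exp_pos _), log_exp] at hlog
  calc
    ((x⁻¹ : ℝ) : EReal) * ENNReal.log p ≤ ((x⁻¹ : ℝ) : EReal) * ((x * r : ℝ) : EReal) :=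
      mul_le_mul_of_nonneg_left hlog (mod_cast inv_nonneg.2 hx.le)
    _ = r := by rw [← EReal.coe_mul, inv_mul_cancel_left₀ hx.ne']

theorem gcd_counts_truncated_bound_general (ε : ℝ) (hε : 0 < ε) :
    ∃ K : ℕ, ∀ k ≥ K, ∀ s : Finset ℕ, (s : Set ℕ).Pairwise Nat.Coprime → (∀ d ∈ s, k < d) →
      ∀ n ≥ s.card, n ≠ 0 →
        (((n : ℝ)⁻¹ : ℝ) : EReal) *
            ENNReal.log ((unifVec n) {ω | ε * (n : ℝ) ^ 2 < ∑ d ∈ s, (Yp n d ω : ℝ) ^ 2})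
          ≤ ((Real.log 2 - (ε / 8) * Real.log k : ℝ) : EReal) := by
  obtain ⟨K, hK⟩ := exists_nat_forall_sum_le_of_summable
    (summable_nat_rpow.2 (by norm_num : (-(3 / 2) : ℝ) < -1)) (show 0 < ε / 4 by positivity)
  refine ⟨max K ⌈exp 12⌉₊, fun k hk s hs hks n hsn hn => ?_⟩
  rw [ge_iff_le, max_le_iff, Nat.ceil_le] at hk
  have hk₀ : (0 : ℝ) < k := (exp_pos _).trans_le hk.2
  have hlog : 12 ≤ log k := (le_log_iff_exp_le hk₀).2 hk.2
  have hpos (d : ℕ) (hd : d ∈ s) : 0 < d := (Nat.zero_le k).trans_lt (hks d hd)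
  have hweight (d : ℕ) (hd : d ∈ s) : log k / 4 ≤ log d / 4 := by
    gcongr
    exact (hks d hd).le
  have hlight : ∑ d ∈ s, (exp (log d / 4) / d) ^ 2 ≤ ε / 4 := by
    rw [Finset.sum_congr rfl fun d hd => exp_log_div_four_div_sq (Nat.cast_pos.2 (hpos d hd))]
    exact hK s fun d hd => hk.1.trans (hks d hd).le
  have hrate : ε / 8 * log k ≤ (log k / 4 - 1) * (ε - ε / 4) := by nlinarith
  refine inv_mul_log_le_of_le_ofReal_exp (by positivity) ?_
  calc
    _ ≤ (2 : ℝ≥0∞) ^ s.card * ENNReal.ofReal (exp (-(n * ((log k / 4 - 1) * (ε - ε / 4))))) :=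
      unifVec_setOf_lt_sum_Yp_sq_le hn hs hpos (by linarith) hweight hlight
    _ ≤ (2 : ℝ≥0∞) ^ n * ENNReal.ofReal (exp (-(n * (ε / 8 * log k)))) := by
      gcongr 2 ^ ?_ * ENNReal.ofReal (exp (-(n * ?_)))
      exact one_le_two
    _ = ENNReal.ofReal (exp (n * (log 2 - ε / 8 * log k))) := by
      rw [mul_sub, sub_eq_add_neg, exp_add, ENNReal.ofReal_mul (exp_pos _).le, exp_nat_mul,
        exp_log two_pos, ENNReal.ofReal_pow zero_le_two, ENNReal.ofReal_ofNat]

lemma pairwise_coprime_primesIn (k₁ k₂ : ℕ) : (primesIn k₁ k₂ : Set ℕ).Pairwise Nat.Coprime :=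
  fun _ hp _ hq =>
    (Nat.coprime_primes (Finset.mem_filter.1 hp).2 (Finset.mem_filter.1 hq).2).2

lemma lt_of_mem_primesIn {k₁ k₂ p : ℕ} (hp : p ∈ primesIn k₁ k₂) : k₁ < p :=
  (Finset.mem_Ioc.1 (Finset.mem_filter.1 hp).1).1

lemma card_primesIn_le (k₁ k₂ : ℕ) : (primesIn k₁ k₂).card ≤ k₂ := by
  calc
    _ ≤ (Finset.Ioc k₁ k₂).card := Finset.card_filter_le _ _
    _ ≤ k₂ := by simp

lemma log_log_nonneg_of_three_le {x : ℝ} (hx : 3 ≤ x) : 0 ≤ log (log x) :=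
  log_nonneg ((le_log_iff_exp_le (by positivity)).2 (exp_one_lt_three.le.trans hx))

/-- For every `ε > 0` there exists `K` such that for all
`k₁, k₂` with `K ≤ k₁ < k₂` and all sufficiently large `n`:
`(1/n)·log P(∑_{p ∈ S(k₁,k₂)} Y_p² > εn²) ≤ 4 log log k₂ + 4 − (ε/8) log k₁`
(the left-hand side being `−∞` when the probability vanishes). -/
theorem gcd_counts_truncated_bound (ε : ℝ) (hε : 0 < ε) :
    ∃ K : ℕ, ∀ k₁ k₂ : ℕ, K ≤ k₁ → k₁ < k₂ →
      ∃ N : ℕ, ∀ n ≥ N,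
        (((n : ℝ)⁻¹ : ℝ) : EReal) *
            ENNReal.log
              ((unifVec n) {ω | ε * (n : ℝ) ^ 2 < ∑ p ∈ primesIn k₁ k₂, (Yp n p ω : ℝ) ^ 2})
          ≤ ((4 * Real.log (Real.log k₂) + 4 - (ε / 8) * Real.log k₁ : ℝ) : EReal) := by
  obtain ⟨K, hK⟩ := gcd_counts_truncated_bound_general ε hε
  refine ⟨max K 3, fun k₁ k₂ hk₁ hk => ⟨k₂, fun n hn => ?_⟩⟩
  refine (hK k₁ (by omega) (primesIn k₁ k₂) (pairwise_coprime_primesIn k₁ k₂)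
    (fun _ => lt_of_mem_primesIn) n ((card_primesIn_le k₁ k₂).trans hn) (by omega)).trans ?_
  have hloglog : 0 ≤ log (log k₂) := log_log_nonneg_of_three_le (mod_cast (by omega : 3 ≤ k₂))
  exact EReal.coe_le_coe (by linarith [log_two_lt_d9])
end
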